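/- arXiv:2001.01657 — 2 statements merged into one kernel-verified Lean document; each statement's English description precedes it below -/
import Mathlib

section
/- Let Ω₁, Ω₂ be open subsets of ℝⁿ and let f ∈ BV_loc(Ω₁, Ω₂) have no jump part. If for every set E ⊆ Ω₂ of finite perimeter in Ω₂ the set f⁻¹(E) has finite perimeter in Ω₁ and P(f⁻¹(E), Ω₁) ≤ K·P(E, Ω₂) for a fixed constant K, then |Df|(f̃⁻¹(A)) ≤ 16nK·Lⁿ(A) for all Borel sets A ⊆ Ω₂. -/
open MeasureTheory Metric Set Filter
open scoped ENNReal Topology NNReal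

noncomputable section

/-- `ℝⁿ` as a Euclidean space. -/
abbrev En (n : ℕ) : Type := EuclideanSpace ℝ (Fin n)

/-- A smooth test function compactly supported inside the set `Ω`. -/
def SmoothTest {n : ℕ} (Ω : Set (En n)) (φ : En n → ℝ) : Prop :=
  ContDiff ℝ (⊤ : ℕ∞) φ ∧ HasCompactSupport φ ∧ tsupport φ ⊆ Ω

/-- Frobenius norm of an `m × n` array of reals. -/
def frobNorm {m n : ℕ} (M : Fin m → Fin n → ℝ) : ℝ :=
  Real.sqrt (∑ j, ∑ i, M j i ^ 2)

/-- `Df = σ ⬝ ν` is the polar decomposition of the distributional derivative of the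
mapping `f : Ω → ℝᵐ`: `σ` is a matrix field of unit Frobenius norm `ν`-a.e., `ν` is
carried by `Ω`, and the integration-by-parts formula holds against all smooth test
functions compactly supported in `Ω`.  In particular `ν = |Df|` is the total variation
measure of `Df` on `Ω`. -/
def IsVariationMeasure {n m : ℕ} (Ω : Set (En n)) (f : En n → En m)
    (σ : En n → Fin m → Fin n → ℝ) (ν : Measure (En n)) : Prop :=
  Measurable σ ∧ (∀ᵐ x ∂ν, frobNorm (σ x) = 1) ∧ ν Ωᶜ = 0 ∧
    ∀ φ : En n → ℝ, SmoothTest Ω φ → ∀ (j : Fin m) (i : Fin n),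
      ∫ x in Ω, f x j * fderiv ℝ φ x (EuclideanSpace.single i 1) ∂volume
        = - ∫ x, φ x * σ x j i ∂ν

/-- `f ∈ BV(Ω, ℝᵐ)` with total variation measure `ν`. -/
def MemBV {n m : ℕ} (Ω : Set (En n)) (f : En n → En m) (ν : Measure (En n)) : Prop :=
  IntegrableOn f Ω volume ∧ ν Ω < ⊤ ∧ ∃ σ, IsVariationMeasure Ω f σ ν

/-- `f ∈ BV_loc(Ω, ℝᵐ)` with total variation measure `ν`, finite on compact subsets of `Ω`. -/
def MemBVloc {n m : ℕ} (Ω : Set (En n)) (f : En n → En m) (ν : Measure (En n)) : Prop :=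
  LocallyIntegrableOn f Ω volume ∧ (∀ C : Set (En n), IsCompact C → C ⊆ Ω → ν C < ⊤) ∧
    ∃ σ, IsVariationMeasure Ω f σ ν

/-- Scalar version of `IsVariationMeasure`: `Du = σ ⬝ ν` with `|σ| = 1` `ν`-a.e. -/
def IsVariationMeasureS {n : ℕ} (Ω : Set (En n)) (u : En n → ℝ)
    (σ : En n → Fin n → ℝ) (ν : Measure (En n)) : Prop :=
  Measurable σ ∧ (∀ᵐ x ∂ν, Real.sqrt (∑ i, σ x i ^ 2) = 1) ∧ ν Ωᶜ = 0 ∧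
    ∀ φ : En n → ℝ, SmoothTest Ω φ → ∀ i : Fin n,
      ∫ x in Ω, u x * fderiv ℝ φ x (EuclideanSpace.single i 1) ∂volume
        = - ∫ x, φ x * σ x i ∂ν

/-- `u ∈ BV(Ω)` with total variation measure `ν`. -/
def MemBVs {n : ℕ} (Ω : Set (En n)) (u : En n → ℝ) (ν : Measure (En n)) : Prop :=
  IntegrableOn u Ω volume ∧ ν Ω < ⊤ ∧ ∃ σ, IsVariationMeasureS Ω u σ ν

/-- `u ∈ BV_loc(Ω)` with total variation measure `ν`. -/
def MemBVlocs {n : ℕ} (Ω : Set (En n)) (u : En n → ℝ) (ν : Measure (En n)) : Prop :=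
  LocallyIntegrableOn u Ω volume ∧ (∀ C : Set (En n), IsCompact C → C ⊆ Ω → ν C < ⊤) ∧
    ∃ σ, IsVariationMeasureS Ω u σ ν

/-- `z` is the approximate limit of `f` at `x`. -/
def ApproxLimAt {n m : ℕ} (f : En n → En m) (x : En n) (z : En m) : Prop :=
  Tendsto (fun r : ℝ =>
      (∫ y in Metric.ball x r, ‖f y - z‖ ∂volume) / (volume (Metric.ball x r)).toReal)
    (nhdsWithin 0 (Set.Ioi 0)) (nhds 0)

/-- `f̃⁻¹(A)`: the preimage of `A` under the precise representative (approximate limit)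
of `f`; a point belongs to it iff the approximate limit of `f` exists there and lies in `A`. -/
def tildePreimage {n m : ℕ} (f : En n → En m) (A : Set (En m)) : Set (En n) :=
  {x | ∃ z ∈ A, ApproxLimAt f x z}

/-- `f` has no jump part: its variation measure does not charge the approximate
discontinuity set of `f`. -/
def NoJumpPart {n m : ℕ} (f : En n → En m) (ν : Measure (En n)) : Prop :=
  ν {x | ¬ ∃ z, ApproxLimAt f x z} = 0

/-- `f` is a homeomorphism of `Ω₁` onto `Ω₂`, with inverse `g`. -/
def IsHomeoOn {n : ℕ} (f g : En n → En n) (Ω₁ Ω₂ : Set (En n)) : Prop :=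
  ContinuousOn f Ω₁ ∧ ContinuousOn g Ω₂ ∧ MapsTo f Ω₁ Ω₂ ∧ MapsTo g Ω₂ Ω₁ ∧
    (∀ x ∈ Ω₁, g (f x) = x) ∧ (∀ y ∈ Ω₂, f (g y) = y)

open scoped Convolution

/-- coordinate measures of a face of a box -/
def faceFam {n : ℕ} (a b : Fin n → ℝ) (i : Fin n) (c : ℝ) (k : Fin n) : Measure ℝ :=
  if k = i then Measure.dirac c else volume.restrict (Ioo (a k) (b k))

instance faceFam_finite {n : ℕ} (a b : Fin n → ℝ) (i : Fin n) (c : ℝ) (k : Fin n) :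
    IsFiniteMeasure (faceFam a b i c k) := by
  unfold faceFam
  split_ifs
  · infer_instance
  · infer_instance

/-- surface measure of a face of a box -/
def faceM {n : ℕ} (a b : Fin n → ℝ) (i : Fin n) (c : ℝ) : Measure (En n) :=
  (Measure.pi (faceFam a b i c)).map (WithLp.toLp 2)

instance faceM_finite {n : ℕ} (a b : Fin n → ℝ) (i : Fin n) (c : ℝ) :
    IsFiniteMeasure (faceM a b i c) := by
  unfold faceM
  infer_instance

def oBox {n : ℕ} (a b : Fin n → ℝ) : Set (En n) := {x | ∀ i, a i < x i ∧ x i < b i}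
def cBox {n : ℕ} (a b : Fin n → ℝ) : Set (En n) := {x | ∀ i, a i ≤ x i ∧ x i ≤ b i}

lemma emb_toLp (n : ℕ) : MeasurableEmbedding (WithLp.toLp 2 : (Fin n → ℝ) → En n) :=
  (MeasurableEquiv.toLp 2 (Fin n → ℝ)).measurableEmbedding

lemma oBox_meas {n : ℕ} (a b : Fin n → ℝ) : MeasurableSet (oBox a b) := by
  have : oBox a b = ⋂ i, {x : En n | a i < x i} ∩ {x : En n | x i < b i} := by
    ext x; simp [oBox]
  rw [this]
  refine MeasurableSet.iInter fun i => ?_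
  exact (measurableSet_lt measurable_const (by fun_prop)).inter
    (measurableSet_lt (by fun_prop) measurable_const)

lemma cBox_compact {n : ℕ} (a b : Fin n → ℝ) : IsCompact (cBox a b) := by
  have : cBox a b = (WithLp.toLp 2) '' (Icc a b) := by
    ext x
    simp only [cBox, mem_ofPred_eq, mem_image, mem_Icc, Pi.le_def]
    constructor
    · intro h
      exact ⟨WithLp.ofLp x, ⟨fun i => (h i).1, fun i => (h i).2⟩, rfl⟩
    · rintro ⟨y, hy, rfl⟩ i
      exact ⟨hy.1 i, hy.2 i⟩
  rw [this]
  exact isCompact_Icc.image (by fun_prop)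

lemma volume_restrict_oBox {n : ℕ} (a b : Fin n → ℝ) :
    (volume : Measure (En n)).restrict (oBox a b) =
      (Measure.pi fun k => (volume : Measure ℝ).restrict (Ioo (a k) (b k))).map (WithLp.toLp 2) := by
  rw [← Measure.restrict_pi_pi, ← (PiLp.volume_preserving_toLp (Fin n)).map_eq,
    Measure.restrict_map (by fun_prop) (oBox_meas a b)]
  congr 2
  ext x
  simp [oBox]

lemma volume_oBox {n : ℕ} (a b : Fin n → ℝ) :
    volume (oBox a b) = ∏ k, ENNReal.ofReal (b k - a k) := by
  rw [← Measure.restrict_apply_univ, volume_restrict_oBox, Measure.map_apply (by fun_prop) .univ]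
  simp [Measure.pi_univ]

lemma faceM_univ {n : ℕ} (a b : Fin n → ℝ) (i : Fin n) (c : ℝ) :
    faceM a b i c univ = ∏ k ∈ Finset.univ.erase i, ENNReal.ofReal (b k - a k) := by
  rw [faceM, Measure.map_apply (by fun_prop) .univ, preimage_univ, Measure.pi_univ,
    ← Finset.mul_prod_erase Finset.univ _ (Finset.mem_univ i)]
  have : faceFam a b i c i univ = 1 := by simp [faceFam]
  rw [this, one_mul]
  refine Finset.prod_congr rfl fun k hk => ?_
  have : k ≠ i := (Finset.mem_erase.1 hk).1
  simp [faceFam, this]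

lemma faceM_ae {n : ℕ} (a b : Fin n → ℝ) (i : Fin n) (c : ℝ) :
    ∀ᵐ x ∂(faceM a b i c), x i = c ∧ ∀ k, k ≠ i → a k < x k ∧ x k < b k := by
  rw [faceM, (emb_toLp n).ae_map_iff]
  have h1 : ∀ k, ∀ᵐ x ∂(Measure.pi (faceFam a b i c)),
      (k = i → x k = c) ∧ (k ≠ i → a k < x k ∧ x k < b k) := by
    intro k
    have : ∀ᵐ s ∂(faceFam a b i c k), (k = i → s = c) ∧ (k ≠ i → a k < s ∧ s < b k) := by
      by_cases hk : k = i
      · simp only [hk, faceFam, if_true, true_imp_iff, ne_eq, not_true, false_imp_iff, and_true]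
        rw [ae_dirac_iff (measurableSet_eq)]
      · simp only [hk, faceFam, if_false, ne_eq, not_false_eq_true, true_imp_iff, false_imp_iff,
          true_and]
        exact ae_restrict_mem measurableSet_Ioo
    exact (Measure.tendsto_eval_ae_ae (i := k)).eventually this
  filter_upwards [ae_all_iff.2 h1] with x hx
  exact ⟨(hx i).1 rfl, fun k hk => (hx k).2 hk⟩

lemma box_ftc {n : ℕ} (a b : Fin n → ℝ) (hab : ∀ i, a i ≤ b i) (i : Fin n) (φ : En n → ℝ)
    (hφ : ContDiff ℝ 1 φ) :
    ∫ x in oBox a b, fderiv ℝ φ x (EuclideanSpace.single i 1)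
      = ∫ x, φ x ∂(faceM a b i (b i)) - ∫ x, φ x ∂(faceM a b i (a i)) := by
  obtain ⟨m, rfl⟩ : ∃ m, n = m + 1 := ⟨n - 1, by have := i.2; omega⟩
  set ρ : Measure (Fin m → ℝ) :=
    Measure.pi fun k => (volume : Measure ℝ).restrict (Ioo (a (i.succAbove k)) (b (i.succAbove k)))
    with hρ
  set T : ℝ → (Fin m → ℝ) → En (m+1) := fun s y => WithLp.toLp 2 (i.insertNth s y) with hT
  have hTc : Continuous fun p : ℝ × (Fin m → ℝ) => T p.1 p.2 := by
    simp only [hT]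
    fun_prop
  have hface : ∀ c, ∫ x, φ x ∂(faceM a b i c) = ∫ y, φ (T c y) ∂ρ := by
    intro c
    rw [faceM, (emb_toLp _).integral_map,
      ← (measurePreserving_piFinSuccAbove (faceFam a b i c) i).symm.integral_comp']
    have e1 : faceFam a b i c i = Measure.dirac c := by simp [faceFam]
    have e2 : (fun j => faceFam a b i c (i.succAbove j)) = fun k =>
        (volume : Measure ℝ).restrict (Ioo (a (i.succAbove k)) (b (i.succAbove k))) := by
      funext k; simp [faceFam, Fin.succAbove_ne]
    simp_rw [e1]
    rw [e2, Measure.dirac_prod, MeasurableEmbedding.integral_map (measurableEmbedding_prodMk_left c)]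
    rfl
  have hder : Continuous fun x => fderiv ℝ φ x (EuclideanSpace.single i 1) := by
    have := hφ.continuous_fderiv (by norm_num)
    fun_prop
  rw [volume_restrict_oBox, (emb_toLp _).integral_map,
      ← (measurePreserving_piFinSuccAbove _ i).symm.integral_comp', hface, hface]
  change ∫ p, fderiv ℝ φ (T p.1 p.2) (EuclideanSpace.single i 1) ∂(((volume : Measure ℝ).restrict (Ioo (a i) (b i))).prod ρ) = _
  have hintg : ∀ c, Integrable (fun y => φ (T c y)) ρ := by
    intro c
    rw [hρ, ← Measure.restrict_pi_pi]
    refine (ContinuousOn.integrableOn_compact (K := Icc (fun k => a (i.succAbove k)) (fun k => b (i.succAbove k))) isCompact_Icc ?_).mono_set ?_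
    · exact (hφ.continuous.comp (hTc.comp (by fun_prop : Continuous fun y : Fin m → ℝ => (c, y)))).continuousOn
    · intro y hy
      simp only [Set.mem_pi, mem_univ, mem_Ioo, true_imp_iff] at hy
      exact ⟨fun k => (hy k).1.le, fun k => (hy k).2.le⟩
  rw [← integral_sub (hintg _) (hintg _), integral_prod_symm]
  · refine integral_congr_ae (Eventually.of_forall fun y => ?_)
    simp only
    rw [← integral_Ioc_eq_integral_Ioo, ← intervalIntegral.integral_of_le (hab i)]
    refine intervalIntegral.integral_eq_sub_of_hasDerivAt (f := fun s => φ (T s y)) ?_ ?_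
    · intro s _
      have h1 : HasDerivAt (fun s => T s y) (EuclideanSpace.single i 1) s := by
        have : (fun s => T s y) = fun s => T 0 y + s • EuclideanSpace.single i (1:ℝ) := by
          funext s
          ext k
          refine Fin.succAboveCases i ?_ (fun k => ?_) k
          · simp [hT]
          · simp [hT, Fin.succAbove_ne]
        rw [this]
        simpa using ((hasDerivAt_id s).smul_const (EuclideanSpace.single i (1:ℝ))).const_add (T 0 y)
      exact ((hφ.differentiable (by norm_num)) (T s y)).hasFDerivAt.comp_hasDerivAt s h1
    · exact (hder.comp (hTc.comp (by fun_prop : Continuous fun s : ℝ => (s, y)))).intervalIntegrable _ _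
  · rw [hρ, ← Measure.restrict_pi_pi, Measure.prod_restrict]
    refine (ContinuousOn.integrableOn_compact (K := Icc (a i) (b i) ×ˢ Icc (fun k => a (i.succAbove k)) (fun k => b (i.succAbove k))) (isCompact_Icc.prod isCompact_Icc) ?_).mono_set ?_
    · exact (hder.comp hTc).continuousOn
    · refine prod_mono Ioo_subset_Icc_self ?_
      intro y hy
      simp only [Set.mem_pi, mem_univ, mem_Ioo, true_imp_iff] at hy
      exact ⟨fun k => (hy k).1.le, fun k => (hy k).2.le⟩

lemma oBox_subset_cBox {n : ℕ} (a b : Fin n → ℝ) : oBox a b ⊆ cBox a b :=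
  fun _ hx i => ⟨(hx i).1.le, (hx i).2.le⟩

/-- the inner normal of a box -/
def boxNormal {n : ℕ} (a b : Fin n → ℝ) (x : En n) (i : Fin n) : ℝ :=
  if x i = a i then 1 else if x i = b i then -1 else 0

lemma boxNormal_meas {n : ℕ} (a b : Fin n → ℝ) : Measurable (boxNormal a b) := by
  refine measurable_pi_lambda _ fun i => ?_
  unfold boxNormal
  refine Measurable.ite (measurableSet_eq_fun (by fun_prop) (by fun_prop)) measurable_const ?_
  exact Measurable.ite (measurableSet_eq_fun (by fun_prop) (by fun_prop)) measurable_const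
    measurable_const

lemma boxNormal_face {n : ℕ} (a b : Fin n → ℝ) (hab : ∀ i, a i < b i) (i : Fin n) :
    (∀ᵐ x ∂(faceM a b i (a i)), x ∈ cBox a b ∧ ∀ k, boxNormal a b x k = if k = i then 1 else 0) ∧
    (∀ᵐ x ∂(faceM a b i (b i)), x ∈ cBox a b ∧ ∀ k, boxNormal a b x k = if k = i then -1 else 0) := by
  constructor
  · filter_upwards [faceM_ae a b i (a i)] with x hx
    refine ⟨fun k => ?_, fun k => ?_⟩
    all_goals by_cases hk : k = i
    · subst hk; rw [hx.1]; exact ⟨le_rfl, (hab k).le⟩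
    · exact ⟨(hx.2 k hk).1.le, (hx.2 k hk).2.le⟩
    · subst hk; simp [boxNormal, hx.1]
    · simp [boxNormal, hk, (hx.2 k hk).1.ne', (hx.2 k hk).2.ne]
  · filter_upwards [faceM_ae a b i (b i)] with x hx
    refine ⟨fun k => ?_, fun k => ?_⟩
    all_goals by_cases hk : k = i
    · subst hk; rw [hx.1]; exact ⟨(hab k).le, le_rfl⟩
    · exact ⟨(hx.2 k hk).1.le, (hx.2 k hk).2.le⟩
    · subst hk; simp [boxNormal, hx.1, (hab k).ne']
    · simp [boxNormal, hk, (hx.2 k hk).1.ne', (hx.2 k hk).2.ne]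

/-- perimeter measure of a box -/
def boxPer {n : ℕ} (a b : Fin n → ℝ) : Measure (En n) :=
  ∑ i, (faceM a b i (a i) + faceM a b i (b i))

instance boxPer_finite {n : ℕ} (a b : Fin n → ℝ) : IsFiniteMeasure (boxPer a b) := by
  unfold boxPer
  infer_instance

lemma boxPer_ae {n : ℕ} (a b : Fin n → ℝ) (P : En n → Prop)
    (h : ∀ i, (∀ᵐ x ∂(faceM a b i (a i)), P x) ∧ ∀ᵐ x ∂(faceM a b i (b i)), P x) :
    ∀ᵐ x ∂(boxPer a b), P x := by
  simp only [boxPer, ae_iff, Measure.finsetSum_apply, Measure.add_apply] at h ⊢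
  simp [h]

lemma boxPer_univ {n : ℕ} (a b : Fin n → ℝ) (hab : ∀ i, a i < b i) :
    boxPer a b univ = ENNReal.ofReal (2 * ∑ i, ∏ k ∈ Finset.univ.erase i, (b k - a k)) := by
  have h0 : ∀ i, 0 ≤ ∏ k ∈ Finset.univ.erase i, (b k - a k) := fun i =>
    Finset.prod_nonneg fun k _ => (sub_pos.2 (hab k)).le
  simp only [boxPer, Measure.finsetSum_apply, Measure.add_apply, faceM_univ]
  rw [ENNReal.ofReal_mul (by norm_num), ENNReal.ofReal_sum_of_nonneg fun i _ => h0 i,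
    Finset.mul_sum]
  refine Finset.sum_congr rfl fun i _ => ?_
  rw [ENNReal.ofReal_prod_of_nonneg fun k _ => (sub_pos.2 (hab k)).le, ← two_mul]
  simp

lemma box_bv {n : ℕ} (a b : Fin n → ℝ) (hab : ∀ i, a i < b i) (Ω : Set (En n))
    (hΩ : cBox a b ⊆ Ω) :
    MemBVs Ω ((oBox a b).indicator fun _ => (1 : ℝ)) (boxPer a b) := by
  have hbd : ∀ᵐ x ∂(boxPer a b), x ∈ cBox a b := by
    refine boxPer_ae a b _ fun i => ⟨?_, ?_⟩
    · filter_upwards [(boxNormal_face a b hab i).1] with x hx using hx.1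
    · filter_upwards [(boxNormal_face a b hab i).2] with x hx using hx.1
  refine ⟨?_, measure_lt_top _ _, boxNormal a b, boxNormal_meas a b, ?_, ?_, ?_⟩
  · refine Integrable.integrableOn ?_
    rw [integrable_indicator_iff (oBox_meas a b)]
    refine integrableOn_const ?_
    exact ((measure_mono (oBox_subset_cBox a b)).trans_lt (cBox_compact a b).measure_lt_top).ne
  · refine boxPer_ae a b _ fun i => ⟨?_, ?_⟩
    · filter_upwards [(boxNormal_face a b hab i).1] with x hx
      simp [hx.2]
    · filter_upwards [(boxNormal_face a b hab i).2] with x hx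
      simp [hx.2]
  · rw [← mem_ae_iff]
    filter_upwards [hbd] with x hx using hΩ hx
  · intro φ hφ i
    have h1 : ∫ x in Ω, (oBox a b).indicator (fun _ => (1:ℝ)) x * fderiv ℝ φ x (EuclideanSpace.single i 1)
        = ∫ x in oBox a b, fderiv ℝ φ x (EuclideanSpace.single i 1) := by
      rw [setIntegral_eq_integral_of_forall_compl_eq_zero, ← integral_indicator (oBox_meas a b)]
      · refine integral_congr_ae (Eventually.of_forall fun x => ?_)
        by_cases hx : x ∈ oBox a b <;> simp [hx]
      · intro x hx
        have : x ∉ oBox a b := fun h => hx (hΩ (oBox_subset_cBox a b h))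
        simp [this]
    have hintg : ∀ (μ : Measure (En n)) [IsFiniteMeasure μ], Integrable (fun x => φ x * boxNormal a b x i) μ := by
      intro μ _
      obtain ⟨C, hC⟩ := hφ.2.1.exists_bound_of_continuous hφ.1.continuous
      refine Integrable.of_bound (C := C) ?_ (Eventually.of_forall fun x => ?_)
      · have := (measurable_pi_apply i).comp (boxNormal_meas a b)
        exact (hφ.1.continuous.measurable.mul this).aestronglyMeasurable
      · rw [norm_mul]
        have : ‖boxNormal a b x i‖ ≤ 1 := by
          unfold boxNormal; split_ifs <;> simp
        calc ‖φ x‖ * ‖boxNormal a b x i‖ ≤ C * 1 := by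
              gcongr
              · exact (norm_nonneg _).trans (hC x)
              · exact hC x
          _ = C := mul_one C
    rw [h1, box_ftc a b (fun i => (hab i).le) i φ (hφ.1.of_le (by exact_mod_cast le_top)), boxPer,
      integral_finsetSum_measure (fun k _ => hintg _)]
    have h2 : ∀ k, ∫ x, φ x * boxNormal a b x i ∂(faceM a b k (a k) + faceM a b k (b k)) =
        if i = k then ∫ x, φ x ∂(faceM a b k (a k)) - ∫ x, φ x ∂(faceM a b k (b k)) else 0 := by
      intro k
      rw [integral_add_measure (hintg _) (hintg _)]
      have e1 : ∫ x, φ x * boxNormal a b x i ∂(faceM a b k (a k)) = ∫ x, φ x * (if i = k then 1 else 0) ∂(faceM a b k (a k)) := by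
        refine integral_congr_ae ?_
        filter_upwards [(boxNormal_face a b hab k).1] with x hx
        rw [hx.2]
      have e2 : ∫ x, φ x * boxNormal a b x i ∂(faceM a b k (b k)) = ∫ x, φ x * (if i = k then -1 else 0) ∂(faceM a b k (b k)) := by
        refine integral_congr_ae ?_
        filter_upwards [(boxNormal_face a b hab k).2] with x hx
        rw [hx.2]
      rw [e1, e2]
      split_ifs with h
      · simp [integral_neg, sub_eq_add_neg]
      · simp
    simp_rw [h2]
    simp

/-- the perimeter hypothesis -/
def PerHyp {n : ℕ} (Ω₁ Ω₂ : Set (En n)) (f : En n → En n) (K : ℝ) : Prop :=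
  ∀ E : Set (En n), E ⊆ Ω₂ →
      ∀ νE : Measure (En n), MemBVs Ω₂ (E.indicator fun _ => (1 : ℝ)) νE →
        ∃ νP : Measure (En n),
          MemBVs Ω₁ ((f ⁻¹' E ∩ Ω₁).indicator fun _ => (1 : ℝ)) νP ∧
          νP Ω₁ ≤ ENNReal.ofReal K * νE Ω₂

lemma test_deriv_cont {n : ℕ} {Ω : Set (En n)} {φ : En n → ℝ} (h : SmoothTest Ω φ) (v : En n) :
    Continuous fun x => fderiv ℝ φ x v := by
  have := h.1.continuous_fderiv (by simp)
  fun_prop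

lemma test_deriv_supp {n : ℕ} {Ω : Set (En n)} {φ : En n → ℝ} (h : SmoothTest Ω φ) (v : En n) :
    HasCompactSupport fun x => fderiv ℝ φ x v := by
  exact (h.2.1.fderiv (𝕜 := ℝ)).comp_left (g := fun T : En n →L[ℝ] ℝ => T v) (by simp)

lemma per_bound {n : ℕ} {Ω : Set (En n)} (hΩ : IsOpen Ω) {u : En n → ℝ} {ν : Measure (En n)}
    (hu : MemBVs Ω u ν) (Φ : Fin n → En n → ℝ) (hΦ : ∀ i, SmoothTest Ω (Φ i))
    (hΦ1 : ∀ x, ∑ i, Φ i x ^ 2 ≤ 1) :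
    |∫ x in Ω, u x * ∑ i, fderiv ℝ (Φ i) x (EuclideanSpace.single i 1)| ≤ (ν Ω).toReal := by
  obtain ⟨hintg, hfin, σ, hσm, hσ1, hσ0, hibp⟩ := hu
  have hνu : ν univ = ν Ω := by
    rw [← measure_add_measure_compl hΩ.measurableSet, hσ0, add_zero]
  have : IsFiniteMeasure ν := ⟨by rw [hνu]; exact hfin⟩
  have hσi : ∀ i, Measurable fun x => σ x i := fun i => (measurable_pi_apply i).comp hσm
  have hcs : ∀ᵐ x ∂ν, |∑ i, Φ i x * σ x i| ≤ 1 := by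
    filter_upwards [hσ1] with x hx
    have h1 : ∑ i, σ x i ^ 2 = 1 := by
      have := congrArg (· ^ 2) hx
      simpa [Real.sq_sqrt (Finset.sum_nonneg fun i _ => sq_nonneg (σ x i))] using this
    have h2 := Finset.sum_mul_sq_le_sq_mul_sq Finset.univ (fun i => Φ i x) (fun i => σ x i)
    rw [h1, mul_one] at h2
    exact abs_le_one_iff_mul_self_le_one.2 (by nlinarith [hΦ1 x])
  have hσb : ∀ i, ∀ᵐ x ∂ν, ‖σ x i‖ ≤ 1 := by
    intro i
    filter_upwards [hσ1] with x hx
    rw [← hx, Real.norm_eq_abs]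
    apply Real.abs_le_sqrt
    exact Finset.single_le_sum (f := fun i => σ x i ^ 2) (fun i _ => sq_nonneg _) (Finset.mem_univ i)
  have hI : ∀ i, Integrable (fun x => Φ i x * σ x i) ν := by
    intro i
    have h1 : Integrable (fun x => σ x i) ν :=
      Integrable.of_bound (hσi i).aestronglyMeasurable 1 (hσb i)
    obtain ⟨C, hC⟩ := (hΦ i).2.1.exists_bound_of_continuous (hΦ i).1.continuous
    exact h1.bdd_mul (hΦ i).1.continuous.aestronglyMeasurable (Eventually.of_forall hC)
  have hJ : ∀ i, IntegrableOn (fun x => u x * fderiv ℝ (Φ i) x (EuclideanSpace.single i 1)) Ω := by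
    intro i
    obtain ⟨C, hC⟩ := (test_deriv_supp (hΦ i) (EuclideanSpace.single i 1)).exists_bound_of_continuous (test_deriv_cont (hΦ i) _)
    exact Integrable.mul_bdd (c := C) hintg (test_deriv_cont (hΦ i) _).aestronglyMeasurable (Eventually.of_forall hC)
  have : ∫ x in Ω, u x * ∑ i, fderiv ℝ (Φ i) x (EuclideanSpace.single i 1)
      = - ∫ x, ∑ i, Φ i x * σ x i ∂ν := by
    simp_rw [Finset.mul_sum]
    rw [integral_finsetSum _ (fun i _ => hJ i), integral_finsetSum _ (fun i _ => hI i), ← Finset.sum_neg_distrib]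
    exact Finset.sum_congr rfl fun i _ => hibp (Φ i) (hΦ i) i
  rw [this, abs_neg]
  calc |∫ x, ∑ i, Φ i x * σ x i ∂ν| ≤ 1 * ν.real univ := by
        rw [← Real.norm_eq_abs]
        exact norm_integral_le_of_norm_le_const hcs
    _ = (ν Ω).toReal := by rw [one_mul, Measure.real, hνu]

lemma per_avg {n : ℕ} {Ω₁ Ω₂ : Set (En n)} (hΩ₁ : IsOpen Ω₁) {f : En n → En n}
    (hf : AEMeasurable f (volume.restrict Ω₁)) {K : ℝ} (hK : 0 ≤ K)
    (hper : PerHyp Ω₁ Ω₂ f K) (L : Fin n → ℝ) (hL : ∀ i, 0 < L i)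
    (w : En n → ℝ) (hw : Continuous w) (hwc : HasCompactSupport w)
    (hwΩ : ∀ z ∈ Function.support w, cBox (fun i => z i) (fun i => z i + L i) ⊆ Ω₂)
    (Φ : Fin n → En n → ℝ) (hΦ : ∀ i, SmoothTest Ω₁ (Φ i))
    (hΦ1 : ∀ x, ∑ i, Φ i x ^ 2 ≤ 1) :
    |∫ x in Ω₁, (∫ z, w z * (oBox 0 L).indicator (fun _ => (1:ℝ)) (f x - z)) *
        ∑ i, fderiv ℝ (Φ i) x (EuclideanSpace.single i 1)|
      ≤ K * (2 * ∑ i, ∏ k ∈ Finset.univ.erase i, L k) * ∫ z, |w z| := by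
  set D : En n → ℝ := fun x => ∑ i, fderiv ℝ (Φ i) x (EuclideanSpace.single i 1) with hD
  set P : ℝ := 2 * ∑ i, ∏ k ∈ Finset.univ.erase i, L k with hP
  have hP0 : 0 ≤ P := mul_nonneg (by norm_num) (Finset.sum_nonneg fun i _ => Finset.prod_nonneg fun k _ => (hL k).le)
  have hDi : Integrable D (volume.restrict Ω₁) := by
    refine Integrable.integrableOn ?_
    exact integrable_finsetSum _ fun i _ => (test_deriv_cont (hΦ i) _).integrable_of_hasCompactSupport
      (test_deriv_supp (hΦ i) _)
  have hwi : Integrable w := hw.integrable_of_hasCompactSupport hwc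
  have hind : Measurable ((oBox 0 L).indicator (fun _ => (1:ℝ)) : En n → ℝ) :=
    measurable_const.indicator (oBox_meas 0 L)
  have hprod : Integrable (Function.uncurry fun x z => w z * (oBox 0 L).indicator (fun _ => (1:ℝ)) (f x - z) * D x)
      ((volume.restrict Ω₁).prod volume) := by
    refine Integrable.mono (hDi.mul_prod hwi) ?_ (Eventually.of_forall fun p => ?_)
    · have h1 : AEMeasurable (fun p : En n × En n => f p.1) ((volume.restrict Ω₁).prod volume) :=
        hf.comp_quasiMeasurePreserving Measure.quasiMeasurePreserving_fst
      have h2 : AEMeasurable (fun p : En n × En n => D p.1) ((volume.restrict Ω₁).prod volume) :=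
        hDi.1.aemeasurable.comp_quasiMeasurePreserving Measure.quasiMeasurePreserving_fst
      have h3 : AEMeasurable (fun p : En n × En n => w p.2) ((volume.restrict Ω₁).prod volume) :=
        (hw.measurable.comp measurable_snd).aemeasurable
      have h4 := hind.comp_aemeasurable (h1.sub measurable_snd.aemeasurable)
      exact ((h3.mul h4).mul h2).aestronglyMeasurable
    · simp only [Function.uncurry]
      rw [norm_mul, norm_mul, norm_mul, mul_comm ‖D p.1‖]
      gcongr
      have : ‖(oBox 0 L).indicator (fun _ => (1:ℝ)) (f p.1 - p.2)‖ ≤ 1 := by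
        unfold indicator; split_ifs <;> simp
      calc _ ≤ ‖w p.2‖ * 1 := by gcongr
        _ = _ := mul_one _
  have hswap : ∫ x in Ω₁, (∫ z, w z * (oBox 0 L).indicator (fun _ => (1:ℝ)) (f x - z)) * D x
      = ∫ z, w z * ∫ x in Ω₁, (oBox 0 L).indicator (fun _ => (1:ℝ)) (f x - z) * D x := by
    simp_rw [← integral_mul_const, ← integral_const_mul, ← mul_assoc]
    exact integral_integral_swap hprod
  rw [hswap]
  have hz : ∀ z, ‖w z * ∫ x in Ω₁, (oBox 0 L).indicator (fun _ => (1:ℝ)) (f x - z) * D x‖ ≤ |w z| * (K * P) := by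
    intro z
    by_cases hwz : w z = 0
    · simp [hwz]
    rw [norm_mul, Real.norm_eq_abs, Real.norm_eq_abs]
    gcongr
    set a : Fin n → ℝ := fun i => z i
    set b : Fin n → ℝ := fun i => z i + L i
    have hab : ∀ i, a i < b i := fun i => by simp [a, b, hL i]
    have hsub := hwΩ z hwz
    obtain ⟨νP, hνP, hle⟩ := hper (oBox a b) ((oBox_subset_cBox a b).trans hsub) (boxPer a b)
      (box_bv a b hab Ω₂ hsub)
    have h1 := per_bound hΩ₁ hνP Φ hΦ hΦ1
    have h2 : ∫ x in Ω₁, (oBox 0 L).indicator (fun _ => (1:ℝ)) (f x - z) * D x =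
       ∫ x in Ω₁, (f ⁻¹' (oBox a b) ∩ Ω₁).indicator (fun _ => (1:ℝ)) x * D x := by
      refine setIntegral_congr_fun hΩ₁.measurableSet fun x hx => ?_
      have : f x - z ∈ oBox 0 L ↔ x ∈ f ⁻¹' (oBox a b) ∩ Ω₁ := by
        simp only [oBox, mem_ofPred_eq, mem_inter_iff, hx, and_true, mem_preimage, a, b]
        refine forall_congr' fun i => ?_
        simp only [PiLp.sub_apply, Pi.zero_apply, sub_pos]
        rw [sub_lt_iff_lt_add']
      by_cases h : f x - z ∈ oBox 0 L
      · simp [h, this.1 h]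
      · have h' := fun h'' => h (this.2 h'')
        simp only [indicator_of_notMem h, indicator_of_notMem h']
    rw [h2]
    refine h1.trans ?_
    have h3 : boxPer a b Ω₂ ≤ ENNReal.ofReal P := by
      refine (measure_mono (subset_univ _)).trans ?_
      rw [boxPer_univ a b hab]
      simp [hP, a, b]
    have h4 : νP Ω₁ ≤ ENNReal.ofReal (K * P) := by
      rw [ENNReal.ofReal_mul hK]
      exact hle.trans (by gcongr)
    exact ENNReal.toReal_le_of_le_ofReal (mul_nonneg hK hP0) h4
  calc |∫ z, w z * ∫ x in Ω₁, (oBox 0 L).indicator (fun _ => (1:ℝ)) (f x - z) * D x|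
      ≤ ∫ z, |w z| * (K * P) := by
        rw [← Real.norm_eq_abs]
        exact norm_integral_le_of_norm_le (hwi.abs.mul_const _) (Eventually.of_forall hz)
    _ = K * P * ∫ z, |w z| := by rw [integral_mul_const]; ring

/-- mollifiers -/
def bmp (n : ℕ) (δ : ℝ) (hδ : 0 < δ) (m : ℕ) : ContDiffBump (0 : En n) where
  rIn := δ / (m + 2) / 2
  rOut := δ / (m + 2)
  rIn_pos := by positivity
  rIn_lt_rOut := half_lt_self (by positivity)

/-- mollification -/
def moll {n : ℕ} (δ : ℝ) (hδ : 0 < δ) (m : ℕ) {V : Type*} [NormedAddCommGroup V] [NormedSpace ℝ V]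
    (u : En n → V) : En n → V :=
  ((bmp n δ hδ m).normed volume ⋆[ContinuousLinearMap.lsmul ℝ ℝ, volume] u)

lemma bmp_rOut_le (n : ℕ) {δ : ℝ} (hδ : 0 < δ) (m : ℕ) : 2 * (bmp n δ hδ m).rOut ≤ δ := by
  simp only [bmp]
  rw [mul_div_assoc', div_le_iff₀ (by positivity)]
  nlinarith [(Nat.cast_nonneg m : (0:ℝ) ≤ m)]

lemma bmp_rOut_tendsto (n : ℕ) {δ : ℝ} (hδ : 0 < δ) :
    Tendsto (fun m => (bmp n δ hδ m).rOut) atTop (𝓝 0) := by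
  simp only [bmp]
  refine Tendsto.div_atTop tendsto_const_nhds ?_
  exact tendsto_atTop_add_const_right _ _ tendsto_natCast_atTop_atTop

section
variable {n : ℕ} {δ : ℝ} (hδ : 0 < δ)

lemma moll_near {f f' : En n → En n} (hf' : Integrable f') {x z : En n}
    (hx : ∀ y ∈ ball x δ, f' y = f y) (hz : ApproxLimAt f x z) :
    ∃ e : ℕ → ℝ, Tendsto e atTop (𝓝 0) ∧
      ∀ m, ∀ y ∈ ball x (bmp n δ hδ m).rOut, ‖moll δ hδ m f' y - z‖ ≤ e m := by
  set r : ℕ → ℝ := fun m => (bmp n δ hδ m).rOut with hr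
  have hrpos : ∀ m, 0 < r m := fun m => (bmp n δ hδ m).rOut_pos
  refine ⟨fun m => 2 ^ n * 2 ^ n * ((∫ y in ball x (2 * r m), ‖f y - z‖) / (volume (ball x (2 * r m))).toReal),
    ?_, ?_⟩
  · have h1 : Tendsto (fun m => 2 * r m) atTop (𝓝[>] 0) := by
      refine tendsto_nhdsWithin_iff.2 ⟨?_, Eventually.of_forall fun m => mul_pos two_pos (hrpos m)⟩
      simpa using (bmp_rOut_tendsto n hδ).const_mul 2
    simpa using (hz.comp h1).const_mul (2 ^ n * 2 ^ n)
  · intro m y hy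
    set ρ := (bmp n δ hδ m).normed (volume : Measure (En n)) with hρ
    have hρi : Integrable (fun s => ρ (y - s)) := ((bmp n δ hδ m).integrable_normed).comp_sub_left y
    have hρb : ∀ s, ρ s ≤ 2 ^ n / volume.real (ball (0 : En n) (r m)) := by
      intro s
      have := (bmp n δ hδ m).normed_le_div_measure_closedBall_rOut (volume : Measure (En n)) 2
        (by simp only [bmp]; linarith) s
      have h2 : volume.real (closedBall (0 : En n) (r m)) = volume.real (ball (0 : En n) (r m)) := by
        rw [Measure.real, Measure.real, Measure.addHaar_closedBall _ _ (hrpos m).le,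
          Measure.addHaar_ball_of_pos _ _ (hrpos m)]
      rw [← h2]
      simpa using this
    have hρ0 : ∀ s, 0 ≤ ρ s := fun s => (bmp n δ hδ m).nonneg_normed s
    have hρ1 : ∫ s, ρ (y - s) = 1 := by
      rw [integral_sub_left_eq_self (fun s => ρ s)]
      exact (bmp n δ hδ m).integral_normed
    have hint1 : Integrable (fun s => ρ (y - s) • f' s) := by
      refine hf'.bdd_smul (2 ^ n / volume.real (ball (0 : En n) (r m))) hρi.1 (Eventually.of_forall fun s => ?_)
      rw [Real.norm_eq_abs, abs_of_nonneg (hρ0 _)]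
      exact hρb _
    have hint2 : Integrable (fun s => ρ (y - s) • z) := hρi.smul_const z
    have e1 : moll δ hδ m f' y - z = ∫ s, ρ (y - s) • (f' s - z) := by
      simp_rw [smul_sub]
      rw [integral_sub hint1 hint2, integral_smul_const, hρ1, one_smul, moll, convolution_eq_swap]
      rfl
    have hsub : ball y (r m) ⊆ ball x (2 * r m) := by
      refine ball_subset_ball' ?_
      have := mem_ball.1 hy
      rw [two_mul]
      linarith
    have hfi : IntegrableOn (fun s => ‖f' s - z‖) (ball x (2 * r m)) :=
      (hf'.integrableOn.sub (integrableOn_const (by exact measure_ball_lt_top.ne))).norm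
    rw [e1]
    calc ‖∫ s, ρ (y - s) • (f' s - z)‖ ≤ ∫ s, (ball x (2 * r m)).indicator (fun s => 2 ^ n / volume.real (ball (0 : En n) (r m)) * ‖f' s - z‖) s := by
          refine norm_integral_le_of_norm_le ?_ (Eventually.of_forall fun s => ?_)
          · exact IntegrableOn.integrable_indicator (hfi.const_mul _) measurableSet_ball
          · by_cases hs : s ∈ ball x (2 * r m)
            · rw [indicator_of_mem hs, norm_smul, Real.norm_eq_abs, abs_of_nonneg (hρ0 _)]
              gcongr
              exact hρb _
            · have : ρ (y - s) = 0 := by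
                by_contra h
                have h1 : y - s ∈ Function.support ρ := h
                rw [(bmp n δ hδ m).support_normed_eq] at h1
                apply hs
                apply hsub
                rw [mem_ball, dist_comm, dist_eq_norm]
                simpa using h1
              rw [indicator_of_notMem hs, this, zero_smul, norm_zero]
      _ = 2 ^ n / volume.real (ball (0 : En n) (r m)) * ∫ s in ball x (2 * r m), ‖f s - z‖ := by
          rw [integral_indicator measurableSet_ball, integral_const_mul]
          congr 1
          refine setIntegral_congr_fun measurableSet_ball fun s hs => ?_
          rw [hx s (ball_subset_ball (bmp_rOut_le n hδ m) hs)]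
      _ = _ := by
          have h1 : (volume (ball x (2 * r m))).toReal = 2 ^ n * volume.real (ball (0 : En n) (r m)) := by
            rw [Measure.addHaar_ball_mul_of_pos (volume : Measure (En n)) x zero_lt_two (r m)]
            simp [Measure.real]
          simp only
          rw [h1]
          have : volume.real (ball (0 : En n) (r m)) ≠ 0 :=
            (ENNReal.toReal_pos (measure_ball_pos _ _ (hrpos m)).ne' measure_ball_lt_top.ne).ne'
          field_simp

lemma moll_tendsto {f f' : En n → En n} (hf' : Integrable f') {x z : En n}
    (hx : ∀ y ∈ ball x δ, f' y = f y) (hz : ApproxLimAt f x z) :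
    Tendsto (fun m => moll δ hδ m f' x) atTop (𝓝 z) := by
  obtain ⟨e, he, h⟩ := moll_near hδ hf' hx hz
  rw [tendsto_iff_norm_sub_tendsto_zero]
  exact squeeze_zero (fun m => norm_nonneg _) (fun m => h m x (mem_ball_self (bmp n δ hδ m).rOut_pos)) he

lemma moll_contDiff {V : Type*} [NormedAddCommGroup V] [NormedSpace ℝ V] [CompleteSpace V] {u : En n → V} (hu : LocallyIntegrable u) (m : ℕ) :
    ContDiff ℝ (⊤ : ℕ∞) (moll δ hδ m u) := by
  refine HasCompactSupport.contDiff_convolution_left _ (bmp n δ hδ m).hasCompactSupport_normed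
    ((bmp n δ hδ m).contDiff_normed) hu

lemma moll_comp {f' : En n → En n} (hf' : Integrable f') (m : ℕ) (x : En n) (k : Fin n) :
    moll δ hδ m f' x k = moll δ hδ m (fun y => f' y k) x := by
  have hex : Integrable (fun t => (bmp n δ hδ m).normed volume t • f' (x - t)) :=
    ((bmp n δ hδ m).hasCompactSupport_normed.convolutionExists_left (ContinuousLinearMap.lsmul ℝ ℝ)
      (bmp n δ hδ m).continuous_normed hf'.locallyIntegrable x)
  have := (EuclideanSpace.proj k : En n →L[ℝ] ℝ).integral_comp_comm hex
  simp only [moll, convolution]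
  simpa using this.symm

/-- the mollifier is self adjoint -/
lemma moll_adj {h u : En n → ℝ} (hh : Integrable h) (hu : Integrable u) (m : ℕ) :
    ∫ x, h x * moll δ hδ m u x = ∫ x, moll δ hδ m h x * u x := by
  set ρ := (bmp n δ hδ m).normed (volume : Measure (En n)) with hρ
  obtain ⟨C, hC⟩ := (bmp n δ hδ m).hasCompactSupport_normed.exists_bound_of_continuous
    ((bmp n δ hδ m).continuous_normed (μ := (volume : Measure (En n))))
  have hI : Integrable (Function.uncurry fun x s => h x * (ρ (x - s) * u s))
      ((volume : Measure (En n)).prod volume) := by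
    have := (hh.mul_prod hu).bdd_mul (c := C) (f := fun p : En n × En n => ρ (p.1 - p.2))
      (by
        have : Continuous ρ := (bmp n δ hδ m).continuous_normed
        exact (by fun_prop : Continuous fun p : En n × En n => ρ (p.1 - p.2)).aestronglyMeasurable)
      (Eventually.of_forall fun p => hC _)
    refine this.congr (Eventually.of_forall fun p => ?_)
    simp only [Function.uncurry]
    ring
  simp only [moll, convolution_eq_swap, ContinuousLinearMap.lsmul_apply, smul_eq_mul]
  simp_rw [← integral_const_mul, ← integral_mul_const]
  rw [integral_integral_swap hI]
  refine integral_congr_ae (Eventually.of_forall fun s => ?_)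
  refine integral_congr_ae (Eventually.of_forall fun x => ?_)
  simp only
  rw [← (bmp n δ hδ m).normed_neg (s - x), neg_sub]
  ring

lemma moll_fderiv {ψ : En n → ℝ} (hψ : ContDiff ℝ (⊤ : ℕ∞) ψ) (hc : HasCompactSupport ψ) (m : ℕ)
    (x v : En n) : fderiv ℝ (moll δ hδ m ψ) x v = moll δ hδ m (fun y => fderiv ℝ ψ y v) x := by
  have h1 := hc.hasFDerivAt_convolution_right (μ := (volume : Measure (En n))) (ContinuousLinearMap.lsmul ℝ ℝ)
    (f := (bmp n δ hδ m).normed (volume : Measure (En n)))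
    (bmp n δ hδ m).continuous_normed.locallyIntegrable (hψ.of_le (by exact_mod_cast le_top)) x
  unfold moll
  rw [h1.fderiv]
  rw [convolution_precompR_apply]
  · exact (bmp n δ hδ m).continuous_normed.locallyIntegrable
  · exact hc.fderiv (𝕜 := ℝ)
  · exact hψ.continuous_fderiv (by simp)

lemma moll_zero {ψ : En n → ℝ} (m : ℕ) (x : En n)
    (h : ∀ y ∈ ball x (bmp n δ hδ m).rOut, ψ y = 0) : moll δ hδ m ψ x = 0 := by
  have hx := h x (mem_ball_self (bmp n δ hδ m).rOut_pos)
  have := (bmp n δ hδ m).normed_convolution_eq_right (μ := (volume : Measure (En n))) (g := ψ) (x₀ := x)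
    (fun y hy => by rw [h y hy, hx])
  rw [moll, this, hx]

lemma moll_bound {ψ : En n → ℝ} {C : ℝ} (hC : ∀ x, |ψ x| ≤ C) (m : ℕ) (x : En n) :
    |moll δ hδ m ψ x| ≤ C := by
  set ρ := (bmp n δ hδ m).normed (volume : Measure (En n)) with hρ
  have hρi : Integrable (fun s => ρ s) := ((bmp n δ hδ m).integrable_normed)
  have hρ1 : ∫ s, ρ s = 1 := (bmp n δ hδ m).integral_normed
  calc |moll δ hδ m ψ x| ≤ ∫ s, ρ s * C := by
        rw [← Real.norm_eq_abs, moll, convolution]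
        refine norm_integral_le_of_norm_le (hρi.mul_const _) (Eventually.of_forall fun s => ?_)
        simp only [ContinuousLinearMap.lsmul_apply, smul_eq_mul, norm_mul, Real.norm_eq_abs]
        rw [abs_of_nonneg ((bmp n δ hδ m).nonneg_normed s)]
        gcongr
        · exact (bmp n δ hδ m).nonneg_normed s
        · exact hC _
    _ = C := by rw [integral_mul_const, hρ1, one_mul]
end

section
variable {n : ℕ} {δ : ℝ} (hδ : 0 < δ)

lemma moll_supp {K0 D : Set (En n)} (hKD : ∀ x ∈ K0, ball x δ ⊆ D) (hD : IsCompact D)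
    {ψ : En n → ℝ} (hψ : ∀ x ∉ K0, ψ x = 0) (m : ℕ) : tsupport (moll δ hδ m ψ) ⊆ D := by
  refine closure_minimal (fun x hx => ?_) hD.isClosed
  by_contra hxD
  refine hx (moll_zero hδ m x fun y hy => ?_)
  by_contra hy0
  have hyK : y ∈ K0 := by
    by_contra h
    exact hy0 (hψ y h)
  apply hxD
  apply hKD y hyK
  rw [mem_ball_comm] at hy
  refine ball_subset_ball ?_ hy
  have := bmp_rOut_le n hδ m
  have := (bmp n δ hδ m).rOut_pos
  linarith

lemma moll_ibp {Ω₁ : Set (En n)} {f : En n → En n} {σ : En n → Fin n → Fin n → ℝ}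
    {νf : Measure (En n)} (hV : IsVariationMeasure Ω₁ f σ νf)
    {K0 D : Set (En n)} (hKD : ∀ x ∈ K0, ball x δ ⊆ D) (hD : IsCompact D) (hDΩ : D ⊆ Ω₁)
    (hfD : Integrable (D.indicator f))
    {ψ : En n → ℝ} (hψ : ContDiff ℝ (⊤ : ℕ∞) ψ) (hc : HasCompactSupport ψ)
    (hψ0 : ∀ x ∉ K0, ψ x = 0) (m : ℕ) (k i : Fin n) :
    ∫ x, ψ x * fderiv ℝ (moll δ hδ m (fun y => D.indicator f y k)) x (EuclideanSpace.single i 1)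
      = ∫ x, moll δ hδ m ψ x * σ x k i ∂νf := by
  have hu : Integrable (fun y => D.indicator f y k) :=
    (EuclideanSpace.proj k : En n →L[ℝ] ℝ).integrable_comp hfD
  set u : En n → ℝ := fun y => D.indicator f y k with hudef
  set e : En n := EuclideanSpace.single i 1 with he
  have hsm : ContDiff ℝ (⊤ : ℕ∞) (moll δ hδ m u) := moll_contDiff hδ hu.locallyIntegrable m
  have hsψ : ContDiff ℝ (⊤ : ℕ∞) (moll δ hδ m ψ) :=
    moll_contDiff hδ hψ.continuous.locallyIntegrable m
  have htest : SmoothTest univ ψ := ⟨hψ, hc, subset_univ _⟩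
  have hdc := test_deriv_cont htest e
  have hds := test_deriv_supp htest e
  have hts := moll_supp hδ hKD hD hψ0 m
  have hmt : SmoothTest Ω₁ (moll δ hδ m ψ) :=
    ⟨hsψ, hD.of_isClosed_subset (isClosed_tsupport _) hts, hts.trans hDΩ⟩
  have hcd : Continuous fun x => fderiv ℝ (moll δ hδ m u) x e := by
    have := hsm.continuous_fderiv (by simp)
    fun_prop
  have h1 : ∫ x, ψ x * fderiv ℝ (moll δ hδ m u) x e
      = - ∫ x, fderiv ℝ ψ x e * moll δ hδ m u x := by
    refine integral_mul_fderiv_eq_neg_fderiv_mul_of_integrable ?_ ?_ ?_ ?_ ?_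
    · exact (hdc.mul hsm.continuous).integrable_of_hasCompactSupport hds.mul_right
    · exact (hψ.continuous.mul hcd).integrable_of_hasCompactSupport hc.mul_right
    · exact (hψ.continuous.mul hsm.continuous).integrable_of_hasCompactSupport hc.mul_right
    · exact fun x _ => (hψ.differentiable (by simp)).differentiableAt
    · exact fun x _ => (hsm.differentiable (by simp)).differentiableAt
  rw [h1, moll_adj hδ (hdc.integrable_of_hasCompactSupport hds) hu m]
  have h2 := hV.2.2.2 _ hmt k i
  rw [eq_neg_iff_add_eq_zero, add_comm, ← eq_neg_iff_add_eq_zero] at h2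
  rw [h2]
  congr 1
  rw [setIntegral_eq_integral_of_forall_compl_eq_zero]
  · refine integral_congr_ae (Eventually.of_forall fun x => ?_)
    simp only
    rw [moll_fderiv hδ hψ hc m x]
    by_cases hx : x ∈ D
    · simp [hudef, indicator_of_mem hx, mul_comm, he]
    · have : fderiv ℝ (moll δ hδ m ψ) x = 0 := by
        refine image_eq_zero_of_notMem_tsupport fun h => hx ?_
        exact hts (tsupport_fderiv_subset ℝ h)
      rw [← moll_fderiv hδ hψ hc m x, this]
      simp
  · intro x hx
    have : fderiv ℝ (moll δ hδ m ψ) x = 0 := by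
      refine image_eq_zero_of_notMem_tsupport fun h => hx ?_
      exact hDΩ (hts (tsupport_fderiv_subset ℝ h))
    rw [this]
    simp


lemma sigma_le {Ω₁ : Set (En n)} {f : En n → En n} {σ : En n → Fin n → Fin n → ℝ}
    {νf : Measure (En n)} (hV : IsVariationMeasure Ω₁ f σ νf) :
    ∀ᵐ x ∂νf, ∀ k i, |σ x k i| ≤ 1 := by
  filter_upwards [hV.2.1] with x hx k i
  rw [frobNorm, Real.sqrt_eq_one] at hx
  have h1 : σ x k i ^ 2 ≤ ∑ i, σ x k i ^ 2 :=
    Finset.single_le_sum (f := fun i => σ x k i ^ 2) (fun _ _ => sq_nonneg _) (Finset.mem_univ i)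
  have h2 : ∑ i, σ x k i ^ 2 ≤ ∑ k, ∑ i, σ x k i ^ 2 :=
    Finset.single_le_sum (f := fun k => ∑ i, σ x k i ^ 2)
      (fun _ _ => Finset.sum_nonneg fun _ _ => sq_nonneg _) (Finset.mem_univ k)
  rw [← sq_le_one_iff_abs_le_one]
  linarith

lemma sigma_meas {Ω₁ : Set (En n)} {f : En n → En n} {σ : En n → Fin n → Fin n → ℝ}
    {νf : Measure (En n)} (hV : IsVariationMeasure Ω₁ f σ νf) (k i : Fin n) :
    Measurable fun x => σ x k i :=
  (measurable_pi_apply i).comp ((measurable_pi_apply k).comp hV.1)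

lemma integ_D {ν : Measure (En n)} {D : Set (En n)} (hD : MeasurableSet D) (hνD : ν D < ⊤)
    {h : En n → ℝ} (hm : AEStronglyMeasurable h ν) {C : ℝ} (hC : ∀ᵐ x ∂ν, |h x| ≤ C)
    (h0 : ∀ x ∉ D, h x = 0) : Integrable h ν := by
  rw [← integrableOn_iff_integrable_of_support_subset (s := D) (fun x hx => by
    by_contra h; exact hx (h0 x h))]
  exact Measure.integrableOn_of_bounded hνD.ne hm (ae_restrict_of_ae hC)

lemma chain_m {Ω₁ : Set (En n)} {f : En n → En n} {σ : En n → Fin n → Fin n → ℝ}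
    {νf : Measure (En n)} (hV : IsVariationMeasure Ω₁ f σ νf)
    {K0 D : Set (En n)} (hKD : ∀ x ∈ K0, ball x δ ⊆ D) (hD : IsCompact D) (hDΩ : D ⊆ Ω₁)
    (hνD : νf D < ⊤) (hfD : Integrable (D.indicator f))
    {φ : En n → ℝ} (hφ : ContDiff ℝ (⊤ : ℕ∞) φ) (hc : HasCompactSupport φ)
    (hφ0 : ∀ x ∉ K0, φ x = 0)
    {G : En n → ℝ} (hG : ContDiff ℝ (⊤ : ℕ∞) G) (hGc : HasCompactSupport G) (m : ℕ) (i : Fin n) :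
    ∫ x, G (moll δ hδ m (D.indicator f) x) * fderiv ℝ φ x (EuclideanSpace.single i 1)
      = - ∫ x, ∑ k, moll δ hδ m (fun y => φ y *
          fderiv ℝ G (moll δ hδ m (D.indicator f) y) (EuclideanSpace.single k 1)) x
            * σ x k i ∂νf := by
  set fm := moll δ hδ m (D.indicator f) with hfm
  have hfs : ContDiff ℝ (⊤ : ℕ∞) fm := moll_contDiff hδ hfD.locallyIntegrable m
  have hu : ∀ k, Integrable (fun y => D.indicator f y k) := fun k =>
    (EuclideanSpace.proj k : En n →L[ℝ] ℝ).integrable_comp hfD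
  have hus : ∀ k, ContDiff ℝ (⊤ : ℕ∞) (moll δ hδ m (fun y => D.indicator f y k)) := fun k =>
    moll_contDiff hδ (hu k).locallyIntegrable m
  have hG' : ∀ k : Fin n, ContDiff ℝ (⊤ : ℕ∞) fun y => fderiv ℝ G y (EuclideanSpace.single k 1) := by
    intro k
    exact (hG.fderiv_right (m := (⊤ : ℕ∞)) (by simp)).clm_apply contDiff_const
  set ψ : Fin n → En n → ℝ := fun k y => φ y * fderiv ℝ G (fm y) (EuclideanSpace.single k 1) with hψ
  have hψs : ∀ k, ContDiff ℝ (⊤ : ℕ∞) (ψ k) := fun k => hφ.mul ((hG' k).comp hfs)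
  have hψc : ∀ k, HasCompactSupport (ψ k) := fun k => hc.mul_right
  have hψ0 : ∀ k, ∀ x ∉ K0, ψ k x = 0 := fun k x hx => by simp [hψ, hφ0 x hx]
  have htest : SmoothTest univ φ := ⟨hφ, hc, subset_univ _⟩
  have hdc := test_deriv_cont htest (EuclideanSpace.single i 1)
  have hds := test_deriv_supp htest (EuclideanSpace.single i 1)
  have hcomp : ContDiff ℝ (⊤ : ℕ∞) (fun x => G (fm x)) := hG.comp hfs
  have hcd : Continuous fun x => fderiv ℝ (fun x => G (fm x)) x (EuclideanSpace.single i 1) := by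
    have := hcomp.continuous_fderiv (by simp)
    fun_prop
  have h1 : ∫ x, G (fm x) * fderiv ℝ φ x (EuclideanSpace.single i 1)
      = - ∫ x, fderiv ℝ (fun x => G (fm x)) x (EuclideanSpace.single i 1) * φ x := by
    refine integral_mul_fderiv_eq_neg_fderiv_mul_of_integrable ?_ ?_ ?_ ?_ ?_
    · exact (hcd.mul hφ.continuous).integrable_of_hasCompactSupport hc.mul_left
    · exact (hcomp.continuous.mul hdc).integrable_of_hasCompactSupport hds.mul_left
    · exact (hcomp.continuous.mul hφ.continuous).integrable_of_hasCompactSupport hc.mul_left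
    · exact fun x _ => (hcomp.differentiable (by simp)).differentiableAt
    · exact fun x _ => (hφ.differentiable (by simp)).differentiableAt
  rw [h1]
  congr 1
  have h2 : ∀ x, fderiv ℝ (fun x => G (fm x)) x (EuclideanSpace.single i 1) * φ x
      = ∑ k, ψ k x * fderiv ℝ (moll δ hδ m (fun y => D.indicator f y k)) x (EuclideanSpace.single i 1) := by
    intro x
    have hd : DifferentiableAt ℝ fm x := (hfs.differentiable (by simp)).differentiableAt
    have e1 : fderiv ℝ (fun x => G (fm x)) x (EuclideanSpace.single i 1)
        = fderiv ℝ G (fm x) (fderiv ℝ fm x (EuclideanSpace.single i 1)) := by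
      have := fderiv_comp' x (hG.differentiable (by simp)).differentiableAt hd (g := G)
      rw [this]
      rfl
    have e2 : ∀ k, fderiv ℝ (moll δ hδ m (fun y => D.indicator f y k)) x (EuclideanSpace.single i 1)
        = (fderiv ℝ fm x (EuclideanSpace.single i 1)) k := by
      intro k
      have : moll δ hδ m (fun y => D.indicator f y k)
          = fun y => (EuclideanSpace.proj k : En n →L[ℝ] ℝ) (fm y) := by
        funext y
        exact (moll_comp hδ hfD m y k).symm
      rw [this]
      have h3 := ((EuclideanSpace.proj k : En n →L[ℝ] ℝ).hasFDerivAt (x := fm x)).comp x hd.hasFDerivAt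
      have h4 := h3.fderiv
      simp only [Function.comp_def] at h4
      rw [h4]
      rfl
    set w := fderiv ℝ fm x (EuclideanSpace.single i 1) with hw
    have e3 : w = ∑ k, w k • (EuclideanSpace.single k (1:ℝ) : En n) := by
      have := (EuclideanSpace.basisFun (Fin n) ℝ).sum_repr w
      simpa using this.symm
    rw [e1]
    simp_rw [e2]
    conv_lhs => rw [e3]
    rw [map_sum, Finset.sum_mul]
    refine Finset.sum_congr rfl fun k _ => ?_
    simp only [map_smul, smul_eq_mul, hψ]
    ring
  simp_rw [h2]
  rw [integral_finsetSum _ fun k _ => ?_, integral_finsetSum _ fun k _ => ?_]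
  · refine Finset.sum_congr rfl fun k _ => ?_
    exact moll_ibp hδ hV hKD hD hDΩ hfD (hψs k) (hψc k) (hψ0 k) m k i
  · have hms : ContDiff ℝ (⊤ : ℕ∞) (moll δ hδ m (ψ k)) := moll_contDiff hδ (hψs k).continuous.locallyIntegrable m
    obtain ⟨C, hC⟩ := (hψc k).exists_bound_of_continuous (hψs k).continuous
    refine integ_D hD.measurableSet hνD (C := C) ?_ ?_ ?_
    · exact (hms.continuous.measurable.mul (sigma_meas hV k i)).aestronglyMeasurable
    · filter_upwards [sigma_le hV] with x hx
      rw [abs_mul]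
      have := moll_bound hδ hC m x
      have h0 : 0 ≤ C := (abs_nonneg _).trans this
      calc _ ≤ C * 1 := by gcongr; exact hx k i
        _ = C := mul_one _
    · intro x hx
      rw [image_eq_zero_of_notMem_tsupport fun h => hx (moll_supp hδ hKD hD (hψ0 k) m h), zero_mul]
  · have hc2 : Continuous fun x => fderiv ℝ (moll δ hδ m (fun y => D.indicator f y k)) x (EuclideanSpace.single i 1) := by
      have := (hus k).continuous_fderiv (by simp)
      fun_prop
    exact ((hψs k).continuous.mul hc2).integrable_of_hasCompactSupport (hψc k).mul_right

end

section
variable {n : ℕ} {δ : ℝ} (hδ : 0 < δ)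

lemma moll_ae {f' : En n → En n} (hf : Integrable f') :
    ∀ᵐ x, Tendsto (fun m => moll δ hδ m f' x) atTop (𝓝 (f' x)) := by
  refine ContDiffBump.ae_convolution_tendsto_right_of_locallyIntegrable
    (φ := fun m => bmp n δ hδ m) (l := atTop) (μ := volume) (K := 2) (bmp_rOut_tendsto n hδ) ?_ hf.locallyIntegrable
  refine Eventually.of_forall fun m => ?_
  simp only [bmp]
  linarith

lemma chain_rule {δ : ℝ} (hδ : 0 < δ) {Ω₁ : Set (En n)} {f : En n → En n} {σ : En n → Fin n → Fin n → ℝ}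
    {νf : Measure (En n)} (hV : IsVariationMeasure Ω₁ f σ νf)
    {K0 D : Set (En n)} (hK0 : IsClosed K0) (hKD : ∀ x ∈ K0, ball x δ ⊆ D) (hD : IsCompact D) (hDΩ : D ⊆ Ω₁)
    (hνD : νf D < ⊤) (hfD : Integrable (D.indicator f))
    {F : En n → En n} (hF : ∀ᵐ x ∂νf, x ∈ K0 → ApproxLimAt f x (F x))
    {φ : En n → ℝ} (hφ : ContDiff ℝ (⊤ : ℕ∞) φ) (hc : HasCompactSupport φ)
    (hφ0 : ∀ x ∉ K0, φ x = 0)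
    {G : En n → ℝ} (hG : ContDiff ℝ (⊤ : ℕ∞) G) (hGc : HasCompactSupport G) (i : Fin n) :
    ∫ x in Ω₁, G (f x) * fderiv ℝ φ x (EuclideanSpace.single i 1)
      = - ∫ x, ∑ k, φ x * fderiv ℝ G (F x) (EuclideanSpace.single k 1) * σ x k i ∂νf := by
  have hK0D : K0 ⊆ D := fun x hx => hKD x hx (mem_ball_self hδ)
  have htest : SmoothTest univ φ := ⟨hφ, hc, subset_univ _⟩
  have hdc := test_deriv_cont htest (EuclideanSpace.single i 1)
  have hds := test_deriv_supp htest (EuclideanSpace.single i 1)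
  have hts : tsupport φ ⊆ K0 := closure_minimal (fun x hx => by
    by_contra h; exact hx (hφ0 x h)) hK0
  have hd0 : ∀ x ∉ K0, fderiv ℝ φ x = 0 := fun x hx =>
    image_eq_zero_of_notMem_tsupport fun h => hx (hts (tsupport_fderiv_subset ℝ h))
  obtain ⟨CG, hCG⟩ := hGc.exists_bound_of_continuous hG.continuous
  obtain ⟨Cφ, hCφ⟩ := hc.exists_bound_of_continuous hφ.continuous
  have hG' : ∀ k : Fin n, Continuous fun y => fderiv ℝ G y (EuclideanSpace.single k 1) := by
    intro k
    exact test_deriv_cont (Ω := univ) ⟨hG, hGc, subset_univ _⟩ _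
  have hG'c : ∀ k : Fin n, HasCompactSupport fun y => fderiv ℝ G y (EuclideanSpace.single k 1) := by
    intro k
    exact test_deriv_supp (Ω := univ) ⟨hG, hGc, subset_univ _⟩ _
  choose CD hCD using fun k => (hG'c k).exists_bound_of_continuous (hG' k)
  have hfs : ∀ m, ContDiff ℝ (⊤ : ℕ∞) (moll δ hδ m (D.indicator f)) := fun m =>
    moll_contDiff hδ hfD.locallyIntegrable m
  have hL : Tendsto (fun m => ∫ x, G (moll δ hδ m (D.indicator f) x) * fderiv ℝ φ x (EuclideanSpace.single i 1))
      atTop (𝓝 (∫ x, G (D.indicator f x) * fderiv ℝ φ x (EuclideanSpace.single i 1))) := by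
    refine tendsto_integral_of_dominated_convergence
      (fun x => CG * ‖fderiv ℝ φ x (EuclideanSpace.single i 1)‖) ?_ ?_ ?_ ?_
    · intro m
      exact ((hG.continuous.comp (hfs m).continuous).mul hdc).aestronglyMeasurable
    · exact ((hdc.integrable_of_hasCompactSupport hds).norm).const_mul _
    · intro m
      refine Eventually.of_forall fun x => ?_
      rw [norm_mul]
      gcongr
      exact hCG _
    · filter_upwards [moll_ae hδ hfD] with x hx
      exact ((hG.continuous.tendsto _).comp hx).mul_const _
  have hLe : ∫ x in Ω₁, G (f x) * fderiv ℝ φ x (EuclideanSpace.single i 1)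
      = ∫ x, G (D.indicator f x) * fderiv ℝ φ x (EuclideanSpace.single i 1) := by
    rw [setIntegral_eq_integral_of_forall_compl_eq_zero]
    · refine integral_congr_ae (Eventually.of_forall fun x => ?_)
      simp only
      by_cases hx : x ∈ K0
      · rw [indicator_of_mem (hK0D hx)]
      · rw [hd0 x hx]; simp
    · intro x hx
      rw [hd0 x fun h => hx (hDΩ (hK0D h))]
      simp
  rw [hLe]
  refine tendsto_nhds_unique hL ?_
  simp_rw [chain_m hδ hV hKD hD hDΩ hνD hfD hφ hc hφ0 hG hGc _ i]
  refine Tendsto.neg ?_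
  have hb : ∀ m k y, |φ y * fderiv ℝ G (moll δ hδ m (D.indicator f) y) (EuclideanSpace.single k 1)| ≤ Cφ * CD k := by
    intro m k y
    rw [abs_mul]
    gcongr
    · exact (norm_nonneg _).trans (hCφ 0)
    · exact hCφ y
    · exact hCD k _
  refine tendsto_integral_of_dominated_convergence (D.indicator fun _ => ∑ k, Cφ * CD k) ?_ ?_ ?_ ?_
  · intro m
    refine (Finset.measurable_fun_sum _ fun k _ => ?_).aestronglyMeasurable
    have : ContDiff ℝ (⊤ : ℕ∞) (moll δ hδ m (fun y => φ y *
          fderiv ℝ G (moll δ hδ m (D.indicator f) y) (EuclideanSpace.single k 1))) := by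
      refine moll_contDiff hδ (Continuous.locallyIntegrable ?_) m
      exact hφ.continuous.mul ((hG' k).comp (hfs m).continuous)
    exact this.continuous.measurable.mul (sigma_meas hV k i)
  · exact (integrable_indicator_iff hD.measurableSet).2 (integrableOn_const hνD.ne)
  · intro m
    filter_upwards [sigma_le hV] with x hx
    by_cases hxD : x ∈ D
    · rw [indicator_of_mem hxD]
      refine (norm_sum_le _ _).trans (Finset.sum_le_sum fun k _ => ?_)
      rw [norm_mul]
      have := moll_bound hδ (hb m k) m x
      have h0 : 0 ≤ Cφ * CD k := (abs_nonneg _).trans this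
      calc _ ≤ Cφ * CD k * 1 := mul_le_mul this (hx k i) (abs_nonneg _) h0
        _ = _ := mul_one _
    · rw [indicator_of_notMem hxD, Finset.sum_eq_zero]
      · simp
      · intro k _
        rw [image_eq_zero_of_notMem_tsupport fun h => hxD (moll_supp hδ hKD hD (fun y hy => by
          rw [hφ0 y hy, zero_mul]) m h), zero_mul]
  · filter_upwards [hF] with x hx
    refine tendsto_finsetSum _ fun k _ => Tendsto.mul_const _ ?_
    by_cases hxK : x ∈ K0
    · obtain ⟨e, he, hem⟩ := moll_near hδ hfD (f := f) (x := x) (z := F x)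
        (fun y hy => indicator_of_mem (hKD x hxK hy) _) (hx hxK)
      rw [Metric.tendsto_atTop']
      intro ε hε
      have hcont : Continuous fun p : En n × En n => φ p.1 * fderiv ℝ G p.2 (EuclideanSpace.single k 1) :=
        (hφ.continuous.comp continuous_fst).mul ((hG' k).comp continuous_snd)
      obtain ⟨η, hη, hηε⟩ := Metric.continuous_iff.1 hcont (x, F x) (ε / 2) (half_pos hε)
      have ev := ((bmp_rOut_tendsto n hδ).eventually (gt_mem_nhds hη)).and
        (he.eventually (gt_mem_nhds hη))
      obtain ⟨N, hN⟩ := eventually_atTop.1 ev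
      refine ⟨N, fun m hm => ?_⟩
      refine lt_of_le_of_lt ?_ (half_lt_self hε)
      have hmeas : Continuous fun y => φ y * fderiv ℝ G (moll δ hδ m (D.indicator f) y) (EuclideanSpace.single k 1) :=
        hφ.continuous.mul ((hG' k).comp (hfs m).continuous)
      have hcl : ∀ y ∈ ball x (bmp n δ hδ m).rOut,
          dist (φ y * fderiv ℝ G (moll δ hδ m (D.indicator f) y) (EuclideanSpace.single k 1))
            (φ x * fderiv ℝ G (F x) (EuclideanSpace.single k 1)) ≤ ε / 2 := by
        intro y hy
        refine (hηε (y, moll δ hδ m (D.indicator f) y) ?_).le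
        rw [Prod.dist_eq]
        refine max_lt ((mem_ball.1 hy).trans (hN m hm.le).1) ?_
        rw [dist_eq_norm]
        exact (hem m y hy).trans_lt (hN m hm.le).2
      exact dist_convolution_le (half_pos hε).le (bmp n δ hδ m).support_normed_eq.subset
        (bmp n δ hδ m).nonneg_normed (bmp n δ hδ m).integral_normed hmeas.aestronglyMeasurable hcl
    · rw [hφ0 x hxK, zero_mul]
      obtain ⟨η, hη, hsub⟩ := Metric.isOpen_iff.1 hK0.isOpen_compl x hxK
      refine tendsto_const_nhds.congr' ?_
      filter_upwards [(bmp_rOut_tendsto n hδ).eventually (gt_mem_nhds hη)] with m hm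
      refine (moll_zero hδ m x fun y hy => ?_).symm
      rw [hφ0 y (hsub (ball_subset_ball hm.le hy)), zero_mul]

end

lemma duality {n : ℕ} {μ : Measure (En n)} [IsFiniteMeasure μ] {χ : En n → ℝ} (hχ : Continuous χ)
    (hχ0 : ∀ x, 0 ≤ χ x) (hχ1 : ∀ x, χ x ≤ 1) {H : En n → En n} (hH : AEStronglyMeasurable H μ)
    {B : ℝ} (hB : ∀ᵐ x ∂μ, ‖H x‖ ≤ B) {M : ℝ}
    (hM : ∀ Φ : En n → En n, ContDiff ℝ (⊤ : ℕ∞) Φ → (∀ x, ‖Φ x‖ ≤ 1) →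
      |∫ x, χ x * inner ℝ (Φ x) (H x) ∂μ| ≤ M) :
    ∫ x, χ x * ‖H x‖ ∂μ ≤ M := by
  wlog hB0 : 0 ≤ B generalizing B
  · exact this (B := max B 0) (hB.mono fun x hx => hx.trans (le_max_left _ _)) (le_max_right _ _)
  set h : En n → En n := fun x => ‖H x‖⁻¹ • H x with hh
  have hhm : AEStronglyMeasurable h μ := hH.norm.inv₀.smul hH
  have hh1 : ∀ x, ‖h x‖ ≤ 1 := by
    intro x
    rw [hh, norm_smul, norm_inv, norm_norm]
    exact inv_mul_le_one
  have hhH : ∀ x, inner ℝ (h x) (H x) = ‖H x‖ := by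
    intro x
    rw [hh, real_inner_smul_left, real_inner_self_eq_norm_sq]
    by_cases h0 : ‖H x‖ = 0
    · simp [h0]
    · field_simp
  have hhi : Integrable h μ := Integrable.of_bound hhm 1 (Eventually.of_forall hh1)
  have key : ∀ ε > 0, ∫ x, χ x * ‖H x‖ ∂μ ≤ M + ε * (B * (2 + 2 * μ.real univ)) := by
    intro ε hε
    obtain ⟨g, -, hgi, hgc, hgI⟩ := hhi.exists_hasCompactSupport_integral_sub_le hε
    set g1 : En n → En n := fun x => (max 1 ‖g x‖)⁻¹ • g x with hg1
    have hpos : ∀ x, 0 < max 1 ‖g x‖ := fun x => lt_max_of_lt_left one_pos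
    have hg1c : Continuous g1 := by
      refine Continuous.smul (Continuous.inv₀ (by fun_prop) fun x => (hpos x).ne') hgc
    have hg1b : ∀ x, ‖g1 x‖ ≤ 1 := by
      intro x
      rw [hg1, norm_smul, norm_inv, Real.norm_eq_abs, abs_of_pos (hpos x), inv_mul_le_iff₀ (hpos x), mul_one]
      exact le_max_right _ _
    have hg1d : ∀ x, ‖g x - g1 x‖ ≤ ‖h x - g x‖ := by
      intro x
      have e : g x - g1 x = (1 - (max 1 ‖g x‖)⁻¹) • g x := by rw [sub_smul, one_smul]
      have h2 : (max 1 ‖g x‖)⁻¹ ≤ 1 := inv_le_one_of_one_le₀ (le_max_left _ _)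
      rw [e, norm_smul, Real.norm_eq_abs, abs_of_nonneg (by linarith)]
      rcases le_total ‖g x‖ 1 with h1 | h1
      · rw [max_eq_left h1]; simp
      · rw [max_eq_right h1, sub_mul, one_mul, inv_mul_cancel₀ (by positivity)]
        have := norm_sub_norm_le (g x) (h x)
        rw [norm_sub_rev] at this
        linarith [hh1 x]
    obtain ⟨g2, hg2s, hg2d, -⟩ := hg1c.exists_contDiff_approx ⊤ (ε := fun _ => ε) (by fun_prop) (fun _ => hε)
    have hg2b : ∀ x, ‖g2 x‖ ≤ 1 + ε := by
      intro x
      have := (hg2d x).le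
      rw [dist_eq_norm] at this
      have h2 := norm_le_norm_add_norm_sub (g1 x) (g2 x)
      rw [norm_sub_rev] at h2
      have h3 := norm_sub_norm_le (g2 x) (g1 x)
      linarith [hg1b x]
    set g3 : En n → En n := fun x => (1 + ε)⁻¹ • g2 x with hg3
    have h1ε : 0 < 1 + ε := by linarith
    have hg3s : ContDiff ℝ (⊤ : ℕ∞) g3 := hg2s.const_smul _
    have hg3b : ∀ x, ‖g3 x‖ ≤ 1 := by
      intro x
      rw [hg3, norm_smul, norm_inv, Real.norm_eq_abs, abs_of_pos h1ε, inv_mul_le_iff₀ h1ε, mul_one]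
      exact hg2b x
    have hg3d : ∀ x, ‖g2 x - g3 x‖ ≤ ε := by
      intro x
      have e : g2 x - g3 x = ε • g3 x := by
        have : g2 x = (1 + ε) • g3 x := by rw [hg3, smul_smul, mul_inv_cancel₀ h1ε.ne', one_smul]
        rw [this, add_smul, one_smul]
        abel
      rw [e, norm_smul, Real.norm_eq_abs, abs_of_pos hε]
      nlinarith [hg3b x]
    have htot : ∀ x, ‖h x - g3 x‖ ≤ 2 * ‖h x - g x‖ + 2 * ε := by
      intro x
      have e : h x - g3 x = (h x - g x) + (g x - g1 x) + (g1 x - g2 x) + (g2 x - g3 x) := by abel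
      have hd := (hg2d x).le
      rw [dist_comm, dist_eq_norm] at hd
      rw [e]
      refine (norm_add_le _ _).trans ?_
      have := (norm_add_le ((h x - g x) + (g x - g1 x)) (g1 x - g2 x))
      have := (norm_add_le (h x - g x) (g x - g1 x))
      linarith [hg1d x, hg3d x]
    have hI3 : Integrable (fun x => χ x * inner ℝ (g3 x) (H x)) μ := by
      refine Integrable.of_bound (hχ.aestronglyMeasurable.mul
        (hg3s.continuous.aestronglyMeasurable.inner hH)) B ?_
      filter_upwards [hB] with x hx
      rw [norm_mul, Real.norm_eq_abs, abs_of_nonneg (hχ0 x)]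
      have := norm_inner_le_norm (𝕜 := ℝ) (g3 x) (H x)
      have h3 : ‖g3 x‖ * ‖H x‖ ≤ 1 * B := by gcongr; exact hg3b x
      calc _ ≤ 1 * (1 * B) := by
            gcongr
            · exact hχ1 x
            · exact this.trans h3
        _ = B := by ring
    have hIh : Integrable (fun x => χ x * ‖H x‖) μ := by
      refine Integrable.of_bound (hχ.aestronglyMeasurable.mul hH.norm) B ?_
      filter_upwards [hB] with x hx
      rw [norm_mul, Real.norm_eq_abs, abs_of_nonneg (hχ0 x), norm_norm]
      calc _ ≤ 1 * B := by
            gcongr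
            · exact hχ1 x
        _ = B := by ring
    have hdI : Integrable (fun x => B * (2 * ‖h x - g x‖ + 2 * ε)) μ :=
      (((hhi.sub hgI).norm.const_mul 2).add (integrable_const _)).const_mul B
    have hle : ∫ x, χ x * ‖H x‖ ∂μ - ∫ x, χ x * inner ℝ (g3 x) (H x) ∂μ
        ≤ ∫ x, B * (2 * ‖h x - g x‖ + 2 * ε) ∂μ := by
      rw [← integral_sub hIh hI3]
      refine integral_mono_ae (hIh.sub hI3) hdI ?_
      filter_upwards [hB] with x hx
      rw [← hhH x, ← mul_sub, ← inner_sub_left]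
      have h4 := real_inner_le_norm (h x - g3 x) (H x)
      have h5 : ‖h x - g3 x‖ * ‖H x‖ ≤ (2 * ‖h x - g x‖ + 2 * ε) * B := by
        gcongr
        exact htot x
      have h6 : 0 ≤ (2 * ‖h x - g x‖ + 2 * ε) * B := by positivity
      calc _ ≤ χ x * ((2 * ‖h x - g x‖ + 2 * ε) * B) :=
            mul_le_mul_of_nonneg_left (h4.trans h5) (hχ0 x)
        _ ≤ 1 * ((2 * ‖h x - g x‖ + 2 * ε) * B) := mul_le_mul_of_nonneg_right (hχ1 x) h6
        _ = _ := by ring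
    have heq : ∫ x, B * (2 * ‖h x - g x‖ + 2 * ε) ∂μ
        = B * (2 * ∫ x, ‖h x - g x‖ ∂μ) + B * (μ.real univ * (2 * ε)) := by
      have hd2 : Integrable (fun x => 2 * ‖h x - g x‖) μ := (hhi.sub hgI).norm.const_mul 2
      rw [integral_const_mul, integral_add hd2 (integrable_const _),
        integral_const_mul, integral_const, smul_eq_mul]
      ring
    have hM3 := (abs_le.1 (hM g3 hg3s hg3b)).2
    have : B * (2 * ∫ x, ‖h x - g x‖ ∂μ) ≤ B * (2 * ε) := by gcongr
    rw [heq] at hle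
    nlinarith
  refine le_of_forall_pos_le_add fun η hη => ?_
  have hc : 0 ≤ B * (2 + 2 * μ.real univ) := by positivity
  refine (key (η / (B * (2 + 2 * μ.real univ) + 1)) (by positivity)).trans ?_
  gcongr
  rw [div_mul_eq_mul_div, div_le_iff₀ (by positivity)]
  nlinarith

/-- the vector of the chain rule -/
def chainVec {n : ℕ} (σ : En n → Fin n → Fin n → ℝ) (F : En n → En n) (G : En n → ℝ) (x : En n) : En n :=
  WithLp.toLp 2 fun i => ∑ k, fderiv ℝ G (F x) (EuclideanSpace.single k 1) * σ x k i

lemma var_ineq {n : ℕ} {δ : ℝ} (hδ : 0 < δ) {Ω₁ Ω₂ : Set (En n)} (hΩ₁ : IsOpen Ω₁)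
    {f : En n → En n} (hf : AEMeasurable f (volume.restrict Ω₁))
    {K : ℝ} (hK : 0 ≤ K) (hper : PerHyp Ω₁ Ω₂ f K)
    {σ : En n → Fin n → Fin n → ℝ} {νf : Measure (En n)} (hV : IsVariationMeasure Ω₁ f σ νf)
    {K0 D : Set (En n)} (hK0 : IsClosed K0) (hKD : ∀ x ∈ K0, ball x δ ⊆ D) (hD : IsCompact D) (hDΩ : D ⊆ Ω₁)
    (hνD : νf D < ⊤) (hfD : Integrable (D.indicator f))
    {F : En n → En n} (hFm : Measurable F) (hF : ∀ᵐ x ∂νf, x ∈ K0 → ApproxLimAt f x (F x))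
    {χ : En n → ℝ} (hχ : ContDiff ℝ (⊤ : ℕ∞) χ)
    (hχK : ∀ x ∉ K0, χ x = 0) (hχ0 : ∀ x, 0 ≤ χ x) (hχ1 : ∀ x, χ x ≤ 1)
    {L : Fin n → ℝ} (hL : ∀ i, 0 < L i) {w : En n → ℝ} (hw : Continuous w) (hwc : HasCompactSupport w)
    (hwΩ : ∀ z ∈ Function.support w, cBox (fun i => z i) (fun i => z i + L i) ⊆ Ω₂)
    {G : En n → ℝ} (hG : ContDiff ℝ (⊤ : ℕ∞) G) (hGc : HasCompactSupport G)
    (hGw : ∀ y, G y = ∫ z, w z * (oBox 0 L).indicator (fun _ => (1:ℝ)) (y - z)) :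
    ∫ x, χ x * ‖chainVec σ F G x‖ ∂νf
      ≤ K * (2 * ∑ i, ∏ k ∈ Finset.univ.erase i, L k) * ∫ z, |w z| := by
  have hK0D : K0 ⊆ D := fun x hx => hKD x hx (mem_ball_self hδ)
  have : IsFiniteMeasure (νf.restrict D) := ⟨by simpa using hνD⟩
  have hχD : ∀ x ∉ D, χ x = 0 := fun x hx => hχK x fun h => hx (hK0D h)
  have hχts : tsupport χ ⊆ K0 := closure_minimal (fun x hx => by
    by_contra h; exact hx (hχK x h)) hK0
  have hχc : HasCompactSupport χ := hD.of_isClosed_subset (isClosed_tsupport _) (hχts.trans hK0D)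
  have hG' : ∀ k : Fin n, Continuous fun y => fderiv ℝ G y (EuclideanSpace.single k 1) := by
    intro k
    exact test_deriv_cont (Ω := univ) ⟨hG, hGc, subset_univ _⟩ _
  have hG'c : ∀ k : Fin n, HasCompactSupport fun y => fderiv ℝ G y (EuclideanSpace.single k 1) := by
    intro k
    exact test_deriv_supp (Ω := univ) ⟨hG, hGc, subset_univ _⟩ _
  choose CD hCD using fun k => (hG'c k).exists_bound_of_continuous (hG' k)
  obtain ⟨CG, hCG⟩ := hGc.exists_bound_of_continuous hG.continuous
  have hHm : ∀ i, Measurable fun x => ∑ k, fderiv ℝ G (F x) (EuclideanSpace.single k 1) * σ x k i := by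
    intro i
    exact Finset.measurable_fun_sum _ fun k _ =>
      ((hG' k).measurable.comp hFm).mul (sigma_meas hV k i)
  have hHb : ∀ᵐ x ∂νf, ∀ i, |∑ k, fderiv ℝ G (F x) (EuclideanSpace.single k 1) * σ x k i| ≤ ∑ k, CD k := by
    filter_upwards [sigma_le hV] with x hx i
    refine (Finset.abs_sum_le_sum_abs _ _).trans (Finset.sum_le_sum fun k _ => ?_)
    rw [abs_mul]
    have h1 := hCD k (F x)
    calc _ ≤ CD k * 1 := mul_le_mul h1 (hx k i) (abs_nonneg _) ((norm_nonneg _).trans h1)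
      _ = _ := mul_one _
  have hHmeas : Measurable (chainVec σ F G) :=
    (WithLp.measurable_toLp 2 _).comp (measurable_pi_lambda _ hHm)
  have hres : ∀ u : En n → ℝ, (∫ x, χ x * u x ∂νf) = ∫ x in D, χ x * u x ∂νf := by
    intro u
    rw [setIntegral_eq_integral_of_forall_compl_eq_zero]
    intro x hx
    rw [hχD x hx, zero_mul]
  rw [hres]
  refine duality (B := ∑ _i : Fin n, ∑ k, CD k) hχ.continuous hχ0 hχ1 hHmeas.aestronglyMeasurable ?_ ?_
  · refine ae_restrict_of_ae ?_
    filter_upwards [hHb] with x hx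
    have e3 : chainVec σ F G x = ∑ i, chainVec σ F G x i • (EuclideanSpace.single i (1:ℝ) : En n) := by
      have := (EuclideanSpace.basisFun (Fin n) ℝ).sum_repr (chainVec σ F G x)
      simpa using this.symm
    rw [e3]
    refine (norm_sum_le _ _).trans (Finset.sum_le_sum fun i _ => ?_)
    rw [norm_smul]
    simpa [chainVec] using hx i
  · intro Φ hΦ hΦ1
    rw [← hres]
    have hΦi : ∀ i, ContDiff ℝ (⊤ : ℕ∞) fun x => χ x * Φ x i := fun i =>
      hχ.mul ((EuclideanSpace.proj i : En n →L[ℝ] ℝ).contDiff.comp hΦ)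
    have hsupp : ∀ i, HasCompactSupport fun x => χ x * Φ x i := fun i => hχc.mul_right
    have hz : ∀ i, ∀ x ∉ K0, χ x * Φ x i = 0 := fun i x hx => by rw [hχK x hx, zero_mul]
    have htest : ∀ i, SmoothTest Ω₁ fun x => χ x * Φ x i := fun i =>
      ⟨hΦi i, hsupp i, (closure_minimal (fun x hx => by
        by_contra h; exact hx (hz i x h)) hK0).trans (hK0D.trans hDΩ)⟩
    have hpa := per_avg hΩ₁ hf hK hper L hL w hw hwc hwΩ (fun i x => χ x * Φ x i) htest (by
      intro x
      have h1 : ∑ i, (χ x * Φ x i) ^ 2 = χ x ^ 2 * ‖Φ x‖ ^ 2 := by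
        rw [EuclideanSpace.norm_sq_eq, Finset.mul_sum]
        refine Finset.sum_congr rfl fun i _ => ?_
        rw [mul_pow, Real.norm_eq_abs, sq_abs]
      rw [h1, ← mul_pow]
      refine pow_le_one₀ (mul_nonneg (hχ0 x) (norm_nonneg _)) ?_
      exact mul_le_one₀ (hχ1 x) (norm_nonneg _) (hΦ1 x))
    simp_rw [← hGw] at hpa
    have hsum : ∫ x in Ω₁, G (f x) * ∑ i, fderiv ℝ (fun x => χ x * Φ x i) x (EuclideanSpace.single i 1)
        = - ∫ x, χ x * inner ℝ (Φ x) (chainVec σ F G x) ∂νf := by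
      simp_rw [Finset.mul_sum]
      rw [integral_finsetSum]
      · simp_rw [chain_rule hδ hV hK0 hKD hD hDΩ hνD hfD hF (hΦi _) (hsupp _) (hz _) hG hGc]
        rw [Finset.sum_neg_distrib]
        congr 1
        rw [← integral_finsetSum]
        · refine integral_congr_ae (Eventually.of_forall fun x => ?_)
          simp only [PiLp.inner_apply, chainVec, Finset.mul_sum, RCLike.inner_apply, conj_trivial,
            Finset.sum_mul]
          refine Finset.sum_congr rfl fun i _ => Finset.sum_congr rfl fun k _ => ?_
          ring
        · intro i _
          obtain ⟨C, hC⟩ := (hsupp i).exists_bound_of_continuous (hΦi i).continuous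
          have e : (fun x => ∑ k, χ x * Φ x i * fderiv ℝ G (F x) (EuclideanSpace.single k 1) * σ x k i)
              = fun x => (χ x * Φ x i) * ∑ k, fderiv ℝ G (F x) (EuclideanSpace.single k 1) * σ x k i := by
            funext x
            rw [Finset.mul_sum]
            exact Finset.sum_congr rfl fun k _ => by ring
          rw [e]
          refine integ_D hD.measurableSet hνD (C := C * ∑ k, CD k)
            ((hΦi i).continuous.measurable.mul (hHm i)).aestronglyMeasurable ?_ ?_
          · filter_upwards [hHb] with x hx
            rw [abs_mul]
            exact mul_le_mul (hC x) (hx i) (abs_nonneg _) ((norm_nonneg _).trans (hC x))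
          · intro x hx
            rw [hχD x hx]; simp
      · intro i _
        have hi := ((test_deriv_cont (htest i) (EuclideanSpace.single i 1)).integrable_of_hasCompactSupport
          (μ := volume.restrict Ω₁) (test_deriv_supp (htest i) (EuclideanSpace.single i 1)))
        exact hi.bdd_mul (c := CG) (hG.continuous.measurable.comp_aemeasurable hf).aestronglyMeasurable
          (Eventually.of_forall fun x => hCG _)
    rw [hsum, abs_neg] at hpa
    exact hpa

/-- average over translated boxes -/
def boxAvg {n : ℕ} (L : Fin n → ℝ) (w : En n → ℝ) (y : En n) : ℝ :=
  ∫ z, w z * (oBox 0 L).indicator (fun _ => (1:ℝ)) (y - z)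

lemma boxAvg_eq {n : ℕ} (L : Fin n → ℝ) (w : En n → ℝ) :
    boxAvg L w = ((oBox 0 L).indicator (fun _ => (1:ℝ)) ⋆[ContinuousLinearMap.lsmul ℝ ℝ, volume] w) := by
  funext y
  rw [boxAvg, convolution_eq_swap]
  refine integral_congr_ae (Eventually.of_forall fun z => ?_)
  simp [mul_comm]

lemma oBox_vol_lt {n : ℕ} (a b : Fin n → ℝ) : volume (oBox a b) < ⊤ :=
  (measure_mono (oBox_subset_cBox a b)).trans_lt (cBox_compact a b).measure_lt_top

lemma box_ind_int {n : ℕ} (L : Fin n → ℝ) :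
    LocallyIntegrable ((oBox 0 L).indicator (fun _ => (1:ℝ))) (volume : Measure (En n)) := by
  refine Integrable.locallyIntegrable ?_
  exact (integrable_indicator_iff (oBox_meas _ _)).2 (integrableOn_const (oBox_vol_lt _ _).ne)

lemma boxAvg_contDiff {n : ℕ} (L : Fin n → ℝ) {w : En n → ℝ} (hw : ContDiff ℝ (⊤ : ℕ∞) w)
    (hwc : HasCompactSupport w) : ContDiff ℝ (⊤ : ℕ∞) (boxAvg L w) := by
  rw [boxAvg_eq]
  exact hwc.contDiff_convolution_right _ (box_ind_int L) hw

lemma boxAvg_supp {n : ℕ} (L : Fin n → ℝ) {w : En n → ℝ}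
    (hwc : HasCompactSupport w) : HasCompactSupport (boxAvg L w) := by
  rw [boxAvg_eq]
  refine HasCompactSupport.convolution _ ?_ hwc
  refine HasCompactSupport.of_support_subset_isCompact (cBox_compact 0 L) ?_
  exact (Set.support_indicator_subset).trans (oBox_subset_cBox _ _)

lemma boxAvg_fderiv {n : ℕ} (L : Fin n → ℝ) {w : En n → ℝ} (hw : ContDiff ℝ (⊤ : ℕ∞) w)
    (hwc : HasCompactSupport w) (y v : En n) :
    fderiv ℝ (boxAvg L w) y v = ∫ t in oBox 0 L, fderiv ℝ w (y - t) v := by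
  have h1 := hwc.hasFDerivAt_convolution_right (μ := (volume : Measure (En n))) (ContinuousLinearMap.lsmul ℝ ℝ)
    (box_ind_int L) (hw.of_le (by exact_mod_cast le_top)) y
  rw [boxAvg_eq, h1.fderiv, convolution_precompR_apply _ (box_ind_int L) (hwc.fderiv (𝕜 := ℝ))
    (hw.continuous_fderiv (by simp)), convolution, ← integral_indicator (oBox_meas _ _)]
  refine integral_congr_ae (Eventually.of_forall fun t => ?_)
  by_cases ht : t ∈ oBox 0 L
  · simp [indicator_of_mem ht]
  · simp [indicator_of_notMem ht]

/-- the side lengths -/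
def sideL {n : ℕ} (j : Fin n) (ℓ : ℝ) (k : Fin n) : ℝ := if k = j then ℓ else n * ℓ

/-- the area of the main face -/
def areaL {n : ℕ} (j : Fin n) (ℓ : ℝ) : ℝ := ∏ k ∈ Finset.univ.erase j, sideL j ℓ k

lemma n_pos {n : ℕ} (j : Fin n) : (1 : ℝ) ≤ n := by
  have := j.2
  exact_mod_cast (by omega : 1 ≤ n)

lemma sideL_pos {n : ℕ} (j : Fin n) {ℓ : ℝ} (hℓ : 0 < ℓ) (k : Fin n) : 0 < sideL j ℓ k := by
  have := n_pos j
  unfold sideL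
  split_ifs
  · exact hℓ
  · positivity

lemma areaL_pos {n : ℕ} (j : Fin n) {ℓ : ℝ} (hℓ : 0 < ℓ) : 0 < areaL j ℓ :=
  Finset.prod_pos fun k _ => sideL_pos j hℓ k

lemma prod_sideL {n : ℕ} (j : Fin n) (ℓ : ℝ) : ∏ k, sideL j ℓ k = ℓ * areaL j ℓ := by
  rw [← Finset.mul_prod_erase Finset.univ _ (Finset.mem_univ j), areaL]
  simp [sideL]

lemma sum_faces {n : ℕ} (j : Fin n) {ℓ : ℝ} (hℓ : 0 < ℓ) :
    2 * ∑ i, ∏ k ∈ Finset.univ.erase i, sideL j ℓ k ≤ 4 * areaL j ℓ := by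
  have hn := n_pos j
  have hA := areaL_pos j hℓ
  have h1 : ∀ i ∈ Finset.univ.erase j, ∏ k ∈ Finset.univ.erase i, sideL j ℓ k = areaL j ℓ / n := by
    intro i hi
    have h2 := Finset.mul_prod_erase Finset.univ (sideL j ℓ) (Finset.mem_univ i)
    rw [prod_sideL] at h2
    have h3 : sideL j ℓ i = n * ℓ := by simp [sideL, Finset.ne_of_mem_erase hi]
    rw [h3] at h2
    rw [eq_div_iff (by positivity)]
    have : ℓ * ((∏ k ∈ Finset.univ.erase i, sideL j ℓ k) * n) = ℓ * areaL j ℓ := by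
      rw [← h2]; ring
    exact mul_left_cancel₀ hℓ.ne' this
  rw [← Finset.add_sum_erase Finset.univ _ (Finset.mem_univ j), Finset.sum_congr rfl h1,
    Finset.sum_const, Finset.card_erase_of_mem (Finset.mem_univ j), Finset.card_univ, Fintype.card_fin,
    nsmul_eq_mul]
  have h5 : ((n - 1 : ℕ) : ℝ) * (areaL j ℓ / n) ≤ areaL j ℓ := by
    rw [mul_div_assoc', div_le_iff₀ (by positivity), mul_comm]
    gcongr
    omega
  change 2 * (areaL j ℓ + _) ≤ _
  linarith

lemma sideL_norm {n : ℕ} (j : Fin n) {ℓ : ℝ} (hℓ : 0 < ℓ) {t : En n}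
    (ht : ∀ k, 0 ≤ t k ∧ t k ≤ sideL j ℓ k) : ‖t‖ ≤ n ^ 2 * ℓ := by
  have hn := n_pos j
  have e3 : t = ∑ i, t i • (EuclideanSpace.single i (1:ℝ) : En n) := by
    have := (EuclideanSpace.basisFun (Fin n) ℝ).sum_repr t
    simpa using this.symm
  rw [e3]
  refine (norm_sum_le _ _).trans ?_
  calc ∑ i, ‖t i • (EuclideanSpace.single i (1:ℝ) : En n)‖ ≤ ∑ _i : Fin n, n * ℓ := by
        refine Finset.sum_le_sum fun i _ => ?_
        rw [norm_smul]
        simp only [PiLp.norm_single, norm_one, mul_one, Real.norm_eq_abs]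
        rw [abs_of_nonneg (ht i).1]
        refine (ht i).2.trans ?_
        unfold sideL
        split_ifs
        · nlinarith
        · exact le_rfl
    _ = _ := by simp; ring

/-- oscillating function -/
def oscW {n : ℕ} (j : Fin n) (N θ : ℝ) (v : En n → ℝ) (y : En n) : ℝ :=
  Real.cos (N * y j + θ) * v y

lemma oscW_contDiff {n : ℕ} (j : Fin n) (N θ : ℝ) {v : En n → ℝ} (hv : ContDiff ℝ (⊤ : ℕ∞) v) :
    ContDiff ℝ (⊤ : ℕ∞) (oscW j N θ v) := by
  refine ContDiff.mul (Real.contDiff_cos.comp ?_) hv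
  exact (contDiff_const.mul (EuclideanSpace.proj j : En n →L[ℝ] ℝ).contDiff).add contDiff_const

lemma oscW_fderiv {n : ℕ} (j : Fin n) (N θ : ℝ) {v : En n → ℝ} (hv : ContDiff ℝ (⊤ : ℕ∞) v)
    {k : Fin n} (hk : k ≠ j) (y : En n) :
    fderiv ℝ (oscW j N θ v) y (EuclideanSpace.single k 1)
      = Real.cos (N * y j + θ) * fderiv ℝ v y (EuclideanSpace.single k 1) := by
  have h1 : HasFDerivAt (fun y : En n => N * y j + θ) (N • (EuclideanSpace.proj j : En n →L[ℝ] ℝ)) y :=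
    (((EuclideanSpace.proj j : En n →L[ℝ] ℝ).hasFDerivAt).const_mul N).add_const θ
  have h2 := (h1.cos).mul ((hv.differentiable (by simp)).differentiableAt (x := y)).hasFDerivAt
  have h3 : fderiv ℝ (oscW j N θ v) y = _ := h2.fderiv
  rw [h3]
  simp [hk.symm]

lemma face_avg {n : ℕ} (j : Fin n) {ℓ : ℝ} (hℓ : 0 < ℓ) {v : En n → ℝ} (hv : ContDiff ℝ (⊤ : ℕ∞) v)
    {C : ℝ} (hC : ∀ y, ‖fderiv ℝ v y‖ ≤ C) (y : En n) {c : ℝ} (hc0 : 0 ≤ c) (hc1 : c ≤ ℓ) :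
    |∫ t, v (y - t) ∂(faceM 0 (sideL j ℓ) j c) - areaL j ℓ * v y| ≤ areaL j ℓ * (C * (n ^ 2 * ℓ)) := by
  have hC0 : 0 ≤ C := (norm_nonneg _).trans (hC 0)
  have hlip : ∀ t : En n, |v (y - t) - v y| ≤ C * ‖t‖ := by
    intro t
    have := (convex_univ (𝕜 := ℝ) (E := En n)).norm_image_sub_le_of_norm_fderiv_le (f := v) (C := C)
      (fun x _ => (hv.differentiable (by simp)).differentiableAt) (fun x _ => hC x) (mem_univ y)
      (mem_univ (y - t))
    simpa using this
  have hbox : ∀ᵐ t ∂(faceM 0 (sideL j ℓ) j c), ‖t‖ ≤ n ^ 2 * ℓ := by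
    filter_upwards [faceM_ae 0 (sideL j ℓ) j c] with t ht
    refine sideL_norm j hℓ fun k => ?_
    by_cases hk : k = j
    · subst hk
      rw [ht.1]
      exact ⟨hc0, by simpa [sideL] using hc1⟩
    · exact ⟨(ht.2 k hk).1.le, (ht.2 k hk).2.le⟩
  have huniv : (faceM 0 (sideL j ℓ) j c).real univ = areaL j ℓ := by
    rw [Measure.real, faceM_univ, ENNReal.toReal_prod]
    refine Finset.prod_congr rfl fun k _ => ?_
    simp [ENNReal.toReal_ofReal (sideL_pos j hℓ k).le]
  have hbd : ∀ᵐ t ∂(faceM 0 (sideL j ℓ) j c), ‖v (y - t) - v y‖ ≤ C * (n ^ 2 * ℓ) := by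
    filter_upwards [hbox] with t ht
    exact (hlip t).trans (by gcongr)
  have hmeas : Continuous fun t => v (y - t) := hv.continuous.comp (by fun_prop)
  have hI : Integrable (fun t => v (y - t)) (faceM 0 (sideL j ℓ) j c) := by
    refine Integrable.of_bound hmeas.aestronglyMeasurable (C * (n ^ 2 * ℓ) + |v y|) ?_
    filter_upwards [hbd] with t ht
    have := norm_sub_norm_le (v (y - t)) (v y)
    rw [← Real.norm_eq_abs]
    linarith
  have h1 : ∫ t, v (y - t) ∂(faceM 0 (sideL j ℓ) j c) - areaL j ℓ * v y
      = ∫ t, (v (y - t) - v y) ∂(faceM 0 (sideL j ℓ) j c) := by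
    rw [integral_sub hI (integrable_const _), integral_const, huniv, smul_eq_mul]
  rw [h1, ← Real.norm_eq_abs]
  have := norm_integral_le_of_norm_le_const hbd
  rw [huniv] at this
  linarith

lemma osc_deriv {n : ℕ} (j : Fin n) {ℓ : ℝ} (hℓ : 0 < ℓ) {N : ℝ} (hN : N * ℓ = Real.pi) (θ : ℝ)
    {v : En n → ℝ} (hv : ContDiff ℝ (⊤ : ℕ∞) v) (hvc : HasCompactSupport v)
    {C : ℝ} (hC : ∀ y, ‖fderiv ℝ v y‖ ≤ C) (y : En n) (k : Fin n) :
    |fderiv ℝ (boxAvg (sideL j ℓ) (oscW j N θ v)) y (EuclideanSpace.single k 1)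
      - if k = j then areaL j ℓ * (2 * Real.cos (N * y j + θ) * v y) else 0|
      ≤ areaL j ℓ * (2 * C * n ^ 2 * ℓ) := by
  have hC0 : 0 ≤ C := (norm_nonneg _).trans (hC 0)
  have hA := areaL_pos j hℓ
  have hn := n_pos j
  have hw := oscW_contDiff j N θ hv
  have hwc : HasCompactSupport (oscW j N θ v) := hvc.mul_left
  rw [boxAvg_fderiv _ hw hwc]
  by_cases hk : k = j
  · subst hk
    rw [if_pos rfl]
    have hφ : ContDiff ℝ 1 fun t => oscW k N θ v (y - t) :=
      (hw.of_le (by exact_mod_cast le_top)).comp (by fun_prop)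
    have hftc := box_ftc 0 (sideL k ℓ) (fun i => (sideL_pos k hℓ i).le) k _ hφ
    have hd : ∀ t, fderiv ℝ (fun t => oscW k N θ v (y - t)) t (EuclideanSpace.single k 1)
        = - fderiv ℝ (oscW k N θ v) (y - t) (EuclideanSpace.single k 1) := by
      intro t
      have h1 : HasFDerivAt (fun t : En n => y - t) (-(ContinuousLinearMap.id ℝ (En n))) t := by
        simpa using (hasFDerivAt_id t).const_sub y
      have h2 := ((hw.differentiable (by simp)).differentiableAt (x := y - t)).hasFDerivAt.comp t h1
      have h3 : fderiv ℝ (fun t => oscW k N θ v (y - t)) t = _ := h2.fderiv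
      rw [h3]
      simp
    simp_rw [hd] at hftc
    rw [integral_neg] at hftc
    have hs : sideL k ℓ k = ℓ := by simp [sideL]
    have f0 : ∫ t, oscW k N θ v (y - t) ∂(faceM 0 (sideL k ℓ) k 0)
        = Real.cos (N * y k + θ) * ∫ t, v (y - t) ∂(faceM 0 (sideL k ℓ) k 0) := by
      rw [← integral_const_mul]
      refine integral_congr_ae ?_
      filter_upwards [faceM_ae 0 (sideL k ℓ) k 0] with t ht
      simp [oscW, ht.1]
    have f1 : ∫ t, oscW k N θ v (y - t) ∂(faceM 0 (sideL k ℓ) k ℓ)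
        = - (Real.cos (N * y k + θ) * ∫ t, v (y - t) ∂(faceM 0 (sideL k ℓ) k ℓ)) := by
      rw [← integral_const_mul, ← integral_neg]
      refine integral_congr_ae ?_
      filter_upwards [faceM_ae 0 (sideL k ℓ) k ℓ] with t ht
      have e : N * (y k - ℓ) + θ = N * y k + θ - Real.pi := by rw [← hN]; ring
      simp only [oscW, PiLp.sub_apply, ht.1]
      rw [e, Real.cos_sub_pi]
      ring
    rw [hs, Pi.zero_apply, f0, f1] at hftc
    have a0 := face_avg k hℓ hv hC y le_rfl hℓ.le
    have a1 := face_avg k hℓ hv hC y hℓ.le le_rfl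
    set I0 := ∫ t, v (y - t) ∂(faceM 0 (sideL k ℓ) k 0)
    set I1 := ∫ t, v (y - t) ∂(faceM 0 (sideL k ℓ) k ℓ)
    have e : (∫ t in oBox 0 (sideL k ℓ), fderiv ℝ (oscW k N θ v) (y - t) (EuclideanSpace.single k 1))
        - areaL k ℓ * (2 * Real.cos (N * y k + θ) * v y)
        = Real.cos (N * y k + θ) * ((I0 - areaL k ℓ * v y) + (I1 - areaL k ℓ * v y)) := by
      linear_combination -hftc
    rw [e, abs_mul]
    have hcos := Real.abs_cos_le_one (N * y k + θ)
    calc _ ≤ 1 * (|I0 - areaL k ℓ * v y| + |I1 - areaL k ℓ * v y|) := by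
          gcongr
          exact abs_add_le _ _
      _ ≤ 1 * (areaL k ℓ * (C * (n ^ 2 * ℓ)) + areaL k ℓ * (C * (n ^ 2 * ℓ))) := by gcongr
      _ = _ := by ring
  · rw [if_neg hk, sub_zero]
    have hb : ∀ t : En n, ‖fderiv ℝ (oscW j N θ v) (y - t) (EuclideanSpace.single k 1)‖ ≤ C := by
      intro t
      rw [oscW_fderiv j N θ hv hk, norm_mul]
      have h1 := (fderiv ℝ v (y - t)).le_opNorm (EuclideanSpace.single k 1)
      simp only [PiLp.norm_single, norm_one, mul_one] at h1
      have h2 : ‖Real.cos (N * (y - t) j + θ)‖ ≤ 1 := Real.abs_cos_le_one _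
      calc _ ≤ 1 * C := mul_le_mul h2 (h1.trans (hC _)) (norm_nonneg _) zero_le_one
        _ = C := one_mul _
    have := norm_setIntegral_le_of_norm_le_const (oBox_vol_lt (0 : Fin n → ℝ) (sideL j ℓ)) fun t _ => hb t
    rw [Real.norm_eq_abs] at this
    refine this.trans ?_
    have hvol : volume.real (oBox (0 : Fin n → ℝ) (sideL j ℓ)) = ℓ * areaL j ℓ := by
      rw [Measure.real, volume_oBox, ENNReal.toReal_prod, ← prod_sideL]
      refine Finset.prod_congr rfl fun k _ => ?_
      simp [ENNReal.toReal_ofReal (sideL_pos j hℓ k).le]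
    rw [hvol]
    have h1 : (1:ℝ) ≤ 2 * n ^ 2 := by nlinarith
    calc C * (ℓ * areaL j ℓ) = areaL j ℓ * (1 * C * ℓ) := by ring
      _ ≤ areaL j ℓ * ((2 * n ^ 2) * C * ℓ) := by gcongr
      _ = _ := by ring

/-- rows of the polar matrix -/
def sRow {n : ℕ} (σ : En n → Fin n → Fin n → ℝ) (j : Fin n) (x : En n) : En n :=
  WithLp.toLp 2 (σ x j)

lemma sRow_meas {n : ℕ} {Ω₁ : Set (En n)} {f : En n → En n} {σ : En n → Fin n → Fin n → ℝ}
    {νf : Measure (En n)} (hV : IsVariationMeasure Ω₁ f σ νf) (j : Fin n) : Measurable (sRow σ j) :=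
  (WithLp.measurable_toLp 2 _).comp (measurable_pi_lambda _ fun i => sigma_meas hV j i)

lemma sRow_sum {n : ℕ} {Ω₁ : Set (En n)} {f : En n → En n} {σ : En n → Fin n → Fin n → ℝ}
    {νf : Measure (En n)} (hV : IsVariationMeasure Ω₁ f σ νf) :
    ∀ᵐ x ∂νf, (∀ j, ‖sRow σ j x‖ ≤ 1) ∧ 1 ≤ ∑ j, ‖sRow σ j x‖ := by
  filter_upwards [hV.2.1] with x hx
  rw [frobNorm, Real.sqrt_eq_one] at hx
  have h1 : ∀ j, ‖sRow σ j x‖ ^ 2 = ∑ i, σ x j i ^ 2 := by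
    intro j
    rw [EuclideanSpace.norm_sq_eq]
    simp [sRow]
  simp_rw [← h1] at hx
  have h2 : ∀ j, ‖sRow σ j x‖ ≤ 1 := by
    intro j
    have : ‖sRow σ j x‖ ^ 2 ≤ 1 := by
      rw [← hx]
      exact Finset.single_le_sum (f := fun j => ‖sRow σ j x‖ ^ 2) (fun _ _ => sq_nonneg _) (Finset.mem_univ j)
    exact (sq_le_one_iff₀ (norm_nonneg _)).1 this
  refine ⟨h2, ?_⟩
  rw [← hx]
  refine Finset.sum_le_sum fun j _ => ?_
  nlinarith [h2 j, norm_nonneg (sRow σ j x)]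

lemma norm_le_sum_coord {n : ℕ} (t : En n) {c : ℝ} (h : ∀ i, |t i| ≤ c) : ‖t‖ ≤ n * c := by
  have e3 : t = ∑ i, t i • (EuclideanSpace.single i (1:ℝ) : En n) := by
    have := (EuclideanSpace.basisFun (Fin n) ℝ).sum_repr t
    simpa using this.symm
  rw [e3]
  refine (norm_sum_le _ _).trans ?_
  calc ∑ i, ‖t i • (EuclideanSpace.single i (1:ℝ) : En n)‖ ≤ ∑ _i : Fin n, c := by
        refine Finset.sum_le_sum fun i _ => ?_
        rw [norm_smul]
        simpa using h i
    _ = _ := by simp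

lemma chainVec_near {n : ℕ} {σ : En n → Fin n → Fin n → ℝ} {F : En n → En n} {G : En n → ℝ} {x : En n}
    (hσ : ∀ k i, |σ x k i| ≤ 1) (j : Fin n) {a c : ℝ}
    (h : ∀ k, |fderiv ℝ G (F x) (EuclideanSpace.single k 1) - if k = j then a else 0| ≤ c) :
    ‖chainVec σ F G x - a • sRow σ j x‖ ≤ n * (n * c) := by
  refine norm_le_sum_coord _ fun i => ?_
  have e : (chainVec σ F G x - a • sRow σ j x) i
      = ∑ k, (fderiv ℝ G (F x) (EuclideanSpace.single k 1) - if k = j then a else 0) * σ x k i := by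
    simp [chainVec, sRow, sub_mul, Finset.sum_sub_distrib]
  rw [e]
  refine (Finset.abs_sum_le_sum_abs _ _).trans ?_
  calc _ ≤ ∑ _k : Fin n, c := by
        refine Finset.sum_le_sum fun k _ => ?_
        rw [abs_mul]
        calc _ ≤ c * 1 := mul_le_mul (h k) (hσ k i) (abs_nonneg _) ((abs_nonneg _).trans (h k))
          _ = c := mul_one _
    _ = _ := by simp

section
variable {n : ℕ} {δ : ℝ} {Ω₁ Ω₂ : Set (En n)} {f : En n → En n} {K : ℝ}
    {σ : En n → Fin n → Fin n → ℝ} {νf : Measure (En n)} {K0 D : Set (En n)}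
    {F : En n → En n} {χ v : En n → ℝ}

lemma osc_one (hδ : 0 < δ) (hΩ₁ : IsOpen Ω₁)
    (hf : AEMeasurable f (volume.restrict Ω₁))
    (hK : 0 ≤ K) (hper : PerHyp Ω₁ Ω₂ f K) (hV : IsVariationMeasure Ω₁ f σ νf)
    (hK0 : IsClosed K0) (hKD : ∀ x ∈ K0, ball x δ ⊆ D) (hD : IsCompact D) (hDΩ : D ⊆ Ω₁)
    (hνD : νf D < ⊤) (hfD : Integrable (D.indicator f))
    (hFm : Measurable F) (hF : ∀ᵐ x ∂νf, x ∈ K0 → ApproxLimAt f x (F x))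
    (hχ : ContDiff ℝ (⊤ : ℕ∞) χ)
    (hχK : ∀ x ∉ K0, χ x = 0) (hχ0 : ∀ x, 0 ≤ χ x) (hχ1 : ∀ x, χ x ≤ 1)
    (hv : SmoothTest Ω₂ v) (hv0 : ∀ y, 0 ≤ v y) {C : ℝ} (hC : ∀ y, ‖fderiv ℝ v y‖ ≤ C)
    (j : Fin n) {ℓ N : ℝ} (hℓ : 0 < ℓ) (hN : N * ℓ = Real.pi)
    (hsmall : ∀ z ∈ tsupport v, closedBall z (n ^ 2 * ℓ) ⊆ Ω₂) (θ : ℝ) :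
    ∫ x, χ x * (2 * |Real.cos (N * F x j + θ)| * v (F x) * ‖sRow σ j x‖) ∂νf
      ≤ 4 * K * (∫ y, v y) + (n * (n * (2 * C * n ^ 2 * ℓ))) * νf.real D := by
  have hK0D : K0 ⊆ D := fun x hx => hKD x hx (mem_ball_self hδ)
  have hχD : ∀ x ∉ D, χ x = 0 := fun x hx => hχK x fun h => hx (hK0D h)
  have hA := areaL_pos j hℓ
  have hn := n_pos j
  set c := n * (n * (2 * C * n ^ 2 * ℓ)) with hc
  set A := areaL j ℓ with hAdef
  have hw := oscW_contDiff j N θ hv.1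
  have hwc : HasCompactSupport (oscW j N θ v) := hv.2.1.mul_left
  set G := boxAvg (sideL j ℓ) (oscW j N θ v) with hG
  have hvar := var_ineq hδ hΩ₁ hf hK hper hV hK0 hKD hD hDΩ hνD hfD hFm hF hχ hχK hχ0 hχ1
    (sideL_pos j hℓ) hw.continuous hwc (by
      intro z hz y hy
      have hzv : z ∈ tsupport v := subset_tsupport _ (right_ne_zero_of_mul hz)
      apply hsmall z hzv
      rw [mem_closedBall, dist_eq_norm]
      refine sideL_norm j hℓ fun k => ?_
      have := hy k
      simp only [PiLp.sub_apply]
      constructor <;> linarith)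
    (boxAvg_contDiff _ hw hwc) (boxAvg_supp _ hwc) (fun y => rfl)
  rw [← hG] at hvar
  -- bound of the right-hand side
  have hwv : ∫ z, |oscW j N θ v z| ≤ ∫ y, v y := by
    refine integral_mono ?_ (hv.1.continuous.integrable_of_hasCompactSupport hv.2.1) fun z => ?_
    · exact (hw.continuous.integrable_of_hasCompactSupport hwc).abs
    · simp only [oscW, abs_mul, abs_of_nonneg (hv0 z)]
      nlinarith [Real.abs_cos_le_one (N * z j + θ), hv0 z]
  have hv_int : 0 ≤ ∫ y, v y := integral_nonneg hv0
  have hrhs : K * (2 * ∑ i, ∏ k ∈ Finset.univ.erase i, sideL j ℓ k) * ∫ z, |oscW j N θ v z|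
      ≤ K * (4 * A) * ∫ y, v y := by
    have h1 := sum_faces j hℓ
    have h0 : 0 ≤ ∫ z, |oscW j N θ v z| := integral_nonneg fun _ => abs_nonneg _
    gcongr
  obtain ⟨Cv, hCv⟩ := hv.2.1.exists_bound_of_continuous hv.1.continuous
  have hnear : ∀ᵐ x ∂νf, ‖sRow σ j x‖ ≤ 1 ∧
      ‖chainVec σ F G x - (A * (2 * Real.cos (N * F x j + θ) * v (F x))) • sRow σ j x‖ ≤ A * c := by
    filter_upwards [sigma_le hV, sRow_sum hV] with x hx hx1
    refine ⟨hx1.1 j, ?_⟩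
    have := chainVec_near (F := F) (G := G) hx j (a := A * (2 * Real.cos (N * F x j + θ) * v (F x)))
      (c := A * (2 * C * n ^ 2 * ℓ)) (fun k => osc_deriv j hℓ hN θ hv.1 hv.2.1 hC (F x) k)
    refine this.trans (le_of_eq ?_)
    rw [hc]; ring
  have hnorm : ∀ x, ‖(A * (2 * Real.cos (N * F x j + θ) * v (F x))) • sRow σ j x‖
      = A * (2 * |Real.cos (N * F x j + θ)| * v (F x) * ‖sRow σ j x‖) := by
    intro x
    rw [norm_smul, Real.norm_eq_abs, abs_mul, abs_mul, abs_mul, abs_of_pos hA, abs_of_nonneg (hv0 _), abs_two]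
    ring
  have hvF : Measurable fun x => v (F x) := hv.1.continuous.measurable.comp hFm
  have hFj : Measurable fun x => F x j := by fun_prop
  have hmL : Measurable fun x => χ x * (2 * |Real.cos (N * F x j + θ)| * v (F x) * ‖sRow σ j x‖) := by
    have h1 : Measurable fun x => |Real.cos (N * F x j + θ)| :=
      (Real.continuous_cos.measurable.comp ((hFj.const_mul N).add_const θ)).abs
    exact hχ.continuous.measurable.mul (((h1.const_mul 2).mul hvF).mul (sRow_meas hV j).norm)
  have hbasic : ∀ x, ‖sRow σ j x‖ ≤ 1 → 2 * |Real.cos (N * F x j + θ)| * v (F x) * ‖sRow σ j x‖ ≤ 2 * Cv := by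
    intro x hx
    have h1 := Real.abs_cos_le_one (N * F x j + θ)
    have h2 : v (F x) ≤ Cv := (le_abs_self _).trans (hCv _)
    have h3 := hv0 (F x)
    have h4 : 2 * |Real.cos (N * F x j + θ)| * v (F x) ≤ 2 * 1 * Cv := by gcongr
    calc _ ≤ 2 * 1 * Cv * 1 := mul_le_mul h4 hx (norm_nonneg _) (by linarith)
      _ = _ := by ring
  have hb0 : ∀ x, 0 ≤ 2 * |Real.cos (N * F x j + θ)| * v (F x) * ‖sRow σ j x‖ := by
    intro x
    have := hv0 (F x)
    positivity
  have hIL : Integrable (fun x => χ x * (2 * |Real.cos (N * F x j + θ)| * v (F x) * ‖sRow σ j x‖)) νf := by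
    refine integ_D hD.measurableSet hνD (C := 2 * Cv) hmL.aestronglyMeasurable ?_ ?_
    · filter_upwards [hnear] with x hx
      rw [abs_of_nonneg (mul_nonneg (hχ0 x) (hb0 x))]
      calc _ ≤ 1 * (2 * Cv) := mul_le_mul (hχ1 x) (hbasic x hx.1) (hb0 x) zero_le_one
        _ = _ := one_mul _
    · intro x hx
      rw [hχD x hx, zero_mul]
  have hG' : ∀ k : Fin n, Continuous fun y => fderiv ℝ G y (EuclideanSpace.single k 1) := by
    intro k
    exact test_deriv_cont (Ω := univ) ⟨boxAvg_contDiff _ hw hwc, boxAvg_supp _ hwc, subset_univ _⟩ _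
  have hHmeas : Measurable (chainVec σ F G) :=
    (WithLp.measurable_toLp 2 _).comp (measurable_pi_lambda _ fun i =>
      Finset.measurable_fun_sum _ fun k _ => ((hG' k).measurable.comp hFm).mul (sigma_meas hV k i))
  have hIH : Integrable (fun x => χ x * ‖chainVec σ F G x‖) νf := by
    refine integ_D hD.measurableSet hνD (C := A * (2 * Cv) + A * c)
      (hχ.continuous.measurable.mul hHmeas.norm).aestronglyMeasurable ?_ ?_
    · filter_upwards [hnear] with x hx
      have h1 := norm_sub_norm_le (chainVec σ F G x) ((A * (2 * Real.cos (N * F x j + θ) * v (F x))) • sRow σ j x)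
      rw [hnorm] at h1
      have h2 : A * (2 * |Real.cos (N * F x j + θ)| * v (F x) * ‖sRow σ j x‖) ≤ A * (2 * Cv) :=
        mul_le_mul_of_nonneg_left (hbasic x hx.1) hA.le
      rw [abs_of_nonneg (mul_nonneg (hχ0 x) (norm_nonneg _))]
      have h3 : ‖chainVec σ F G x‖ ≤ A * (2 * Cv) + A * c := by linarith [hx.2]
      nlinarith [hχ0 x, hχ1 x, norm_nonneg (chainVec σ F G x)]
    · intro x hx
      rw [hχD x hx, zero_mul]
  have hIc : Integrable (D.indicator fun _ => A * c) νf :=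
    (integrable_indicator_iff hD.measurableSet).2 (integrableOn_const hνD.ne)
  have hmono : ∫ x, A * (χ x * (2 * |Real.cos (N * F x j + θ)| * v (F x) * ‖sRow σ j x‖)) ∂νf
      ≤ ∫ x, (χ x * ‖chainVec σ F G x‖ + D.indicator (fun _ => A * c) x) ∂νf := by
    refine integral_mono_ae (hIL.const_mul A) (hIH.add hIc) ?_
    filter_upwards [hnear] with x hx
    by_cases hxD : x ∈ D
    · have h1 := norm_sub_norm_le ((A * (2 * Real.cos (N * F x j + θ) * v (F x))) • sRow σ j x) (chainVec σ F G x)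
      rw [hnorm, norm_sub_rev] at h1
      simp only [indicator_of_mem hxD]
      have h2 : 0 ≤ A * c := (norm_nonneg _).trans hx.2
      have h3 : A * (2 * |Real.cos (N * F x j + θ)| * v (F x) * ‖sRow σ j x‖) ≤ ‖chainVec σ F G x‖ + A * c := by
        linarith [hx.2]
      have h4 := mul_le_mul_of_nonneg_left h3 (hχ0 x)
      have h5 : χ x * (A * c) ≤ A * c := mul_le_of_le_one_left h2 (hχ1 x)
      calc _ = χ x * (A * (2 * |Real.cos (N * F x j + θ)| * v (F x) * ‖sRow σ j x‖)) := by ring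
        _ ≤ _ := by rw [mul_add] at h4; linarith
    · simp [hχD x hxD, indicator_of_notMem hxD]
  rw [integral_const_mul, integral_add hIH hIc, integral_indicator hD.measurableSet, setIntegral_const,
    smul_eq_mul] at hmono
  have hfin := hmono.trans (add_le_add (hvar.trans hrhs) le_rfl)
  have : A * ∫ x, χ x * (2 * |Real.cos (N * F x j + θ)| * v (F x) * ‖sRow σ j x‖) ∂νf
      ≤ A * (4 * K * (∫ y, v y) + c * νf.real D) := by
    refine hfin.trans (le_of_eq ?_)
    ring
  exact le_of_mul_le_mul_left this hA

end

section
variable {n : ℕ} {δ : ℝ} {Ω₁ Ω₂ : Set (En n)} {f : En n → En n} {K : ℝ}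
    {σ : En n → Fin n → Fin n → ℝ} {νf : Measure (En n)} {K0 D : Set (En n)}
    {F : En n → En n} {χ v : En n → ℝ}

lemma chi_int (hD : IsCompact D) (hνD : νf D < ⊤) (hχ : Continuous χ) (hχD : ∀ x ∉ D, χ x = 0)
    (hχ0 : ∀ x, 0 ≤ χ x) (hχ1 : ∀ x, χ x ≤ 1) {g : En n → ℝ} (hg : Measurable g) {B : ℝ}
    (hB : ∀ᵐ x ∂νf, |g x| ≤ B) : Integrable (fun x => χ x * g x) νf := by
  refine integ_D hD.measurableSet hνD (C := B) (hχ.measurable.mul hg).aestronglyMeasurable ?_ ?_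
  · filter_upwards [hB] with x hx
    rw [abs_mul, abs_of_nonneg (hχ0 x)]
    calc _ ≤ 1 * B := mul_le_mul (hχ1 x) hx (abs_nonneg _) zero_le_one
      _ = B := one_mul _
  · intro x hx
    rw [hχD x hx, zero_mul]

lemma osc_all (hδ : 0 < δ) (hΩ₁ : IsOpen Ω₁) (hΩ₂ : IsOpen Ω₂)
    (hf : AEMeasurable f (volume.restrict Ω₁))
    (hK : 0 ≤ K) (hper : PerHyp Ω₁ Ω₂ f K) (hV : IsVariationMeasure Ω₁ f σ νf)
    (hK0 : IsClosed K0) (hKD : ∀ x ∈ K0, ball x δ ⊆ D) (hD : IsCompact D) (hDΩ : D ⊆ Ω₁)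
    (hνD : νf D < ⊤) (hfD : Integrable (D.indicator f))
    (hFm : Measurable F) (hF : ∀ᵐ x ∂νf, x ∈ K0 → ApproxLimAt f x (F x))
    (hχ : ContDiff ℝ (⊤ : ℕ∞) χ)
    (hχK : ∀ x ∉ K0, χ x = 0) (hχ0 : ∀ x, 0 ≤ χ x) (hχ1 : ∀ x, χ x ≤ 1)
    (hv : SmoothTest Ω₂ v) (hv0 : ∀ y, 0 ≤ v y) :
    ∫ x, χ x * v (F x) ∂νf ≤ n * (4 * K * (∫ y, v y)) := by
  have hK0D : K0 ⊆ D := fun x hx => hKD x hx (mem_ball_self hδ)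
  have hχD : ∀ x ∉ D, χ x = 0 := fun x hx => hχK x fun h => hx (hK0D h)
  obtain ⟨C, hC⟩ := (hv.2.1.fderiv (𝕜 := ℝ)).exists_bound_of_continuous (hv.1.continuous_fderiv (by simp))
  have hC0 : 0 ≤ C := (norm_nonneg _).trans (hC 0)
  obtain ⟨Cv, hCv⟩ := hv.2.1.exists_bound_of_continuous hv.1.continuous
  obtain ⟨η, hη, hηΩ⟩ := hv.2.1.exists_cthickening_subset_open hΩ₂ hv.2.2
  have hvF : Measurable fun x => v (F x) := hv.1.continuous.measurable.comp hFm
  have hrow : ∀ j, ∫ x, χ x * (v (F x) * ‖sRow σ j x‖) ∂νf ≤ 4 * K * (∫ y, v y) := by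
    intro j
    have hn := n_pos j
    have hFj : Measurable fun x => F x j := by fun_prop
    have hIr : Integrable (fun x => χ x * (v (F x) * ‖sRow σ j x‖)) νf := by
      refine chi_int hD hνD hχ.continuous hχD hχ0 hχ1 (hvF.mul (sRow_meas hV j).norm) (B := Cv) ?_
      filter_upwards [sRow_sum hV] with x hx
      rw [abs_mul, abs_norm]
      calc _ ≤ Cv * 1 := mul_le_mul (hCv _) (hx.1 j) (norm_nonneg _) ((norm_nonneg _).trans (hCv (F x)))
        _ = _ := mul_one _
    have hIt : ∀ N θ, Integrable (fun x => χ x * (2 * |Real.cos (N * F x j + θ)| * v (F x) * ‖sRow σ j x‖)) νf := by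
      intro N θ
      have h1 : Measurable fun x => |Real.cos (N * F x j + θ)| :=
        (Real.continuous_cos.measurable.comp ((hFj.const_mul N).add_const θ)).abs
      refine chi_int hD hνD hχ.continuous hχD hχ0 hχ1
        (((h1.const_mul 2).mul hvF).mul (sRow_meas hV j).norm) (B := 2 * 1 * Cv * 1) ?_
      filter_upwards [sRow_sum hV] with x hx
      rw [abs_mul, abs_norm, abs_mul, abs_mul, abs_abs, abs_two]
      have h2 := Real.abs_cos_le_one (N * F x j + θ)
      have h3 : |v (F x)| ≤ Cv := hCv _
      have h4 : 0 ≤ Cv := (abs_nonneg _).trans h3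
      have h5 : 2 * |Real.cos (N * F x j + θ)| * |v (F x)| ≤ 2 * 1 * Cv := by gcongr
      exact mul_le_mul h5 (hx.1 j) (norm_nonneg _) (by linarith)
    have hstep : ∀ ℓ : ℝ, 0 < ℓ → n ^ 2 * ℓ ≤ η →
        ∫ x, χ x * (v (F x) * ‖sRow σ j x‖) ∂νf
          ≤ 4 * K * (∫ y, v y) + ℓ * ((n * (n * (2 * C * n ^ 2))) * νf.real D) := by
      intro ℓ hℓ hℓη
      have hN : (Real.pi / ℓ) * ℓ = Real.pi := div_mul_cancel₀ _ hℓ.ne'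
      have hsm : ∀ z ∈ tsupport v, closedBall z (n ^ 2 * ℓ) ⊆ Ω₂ := fun z hz =>
        ((closedBall_subset_closedBall hℓη).trans (closedBall_subset_cthickening hz η)).trans hηΩ
      have a0 := osc_one hδ hΩ₁ hf hK hper hV hK0 hKD hD hDΩ hνD hfD hFm hF hχ hχK hχ0 hχ1 hv hv0 hC j hℓ hN hsm 0
      have a1 := osc_one hδ hΩ₁ hf hK hper hV hK0 hKD hD hDΩ hνD hfD hFm hF hχ hχK hχ0 hχ1 hv hv0 hC j hℓ hN hsm (Real.pi / 2)
      have hle : ∫ x, 2 * (χ x * (v (F x) * ‖sRow σ j x‖)) ∂νf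
          ≤ ∫ x, (χ x * (2 * |Real.cos (Real.pi / ℓ * F x j + 0)| * v (F x) * ‖sRow σ j x‖)
            + χ x * (2 * |Real.cos (Real.pi / ℓ * F x j + Real.pi / 2)| * v (F x) * ‖sRow σ j x‖)) ∂νf := by
        refine integral_mono (hIr.const_mul 2) ((hIt _ _).add (hIt _ _)) fun x => ?_
        simp only
        rw [Real.cos_add_pi_div_two, add_zero, abs_neg]
        set a := Real.pi / ℓ * F x j
        have h1 : 1 ≤ |Real.cos a| + |Real.sin a| := by
          have := Real.sin_sq_add_cos_sq a
          rw [← sq_abs (Real.sin a), ← sq_abs (Real.cos a)] at this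
          nlinarith [Real.abs_cos_le_one a, Real.abs_sin_le_one a, abs_nonneg (Real.cos a), abs_nonneg (Real.sin a)]
        have h2 : 0 ≤ 2 * (χ x * (v (F x) * ‖sRow σ j x‖)) := by
          have := hv0 (F x)
          have := hχ0 x
          positivity
        nlinarith [mul_le_mul_of_nonneg_left h1 h2]
      rw [integral_const_mul, integral_add (hIt _ _) (hIt _ _)] at hle
      linarith
    refine le_of_forall_pos_le_add fun ε hε => ?_
    set Q := (n * (n * (2 * C * n ^ 2))) * νf.real D with hQ
    have hQ0 : 0 ≤ Q := by positivity
    have h1 : 0 < min (η / n ^ 2) (ε / (Q + 1)) := by positivity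
    refine (hstep _ h1 ?_).trans ?_
    · calc (n:ℝ) ^ 2 * min (η / n ^ 2) (ε / (Q + 1)) ≤ n ^ 2 * (η / n ^ 2) := by
            gcongr; exact min_le_left _ _
        _ = η := by field_simp
    · gcongr
      calc min (η / n ^ 2) (ε / (Q + 1)) * Q ≤ (ε / (Q + 1)) * Q := by
            gcongr; exact min_le_right _ _
        _ ≤ ε := by
            rw [div_mul_eq_mul_div, div_le_iff₀ (by positivity)]
            nlinarith
  have hIr : ∀ j, Integrable (fun x => χ x * (v (F x) * ‖sRow σ j x‖)) νf := by
    intro j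
    refine chi_int hD hνD hχ.continuous hχD hχ0 hχ1 (hvF.mul (sRow_meas hV j).norm) (B := Cv) ?_
    filter_upwards [sRow_sum hV] with x hx
    rw [abs_mul, abs_norm]
    calc _ ≤ Cv * 1 := mul_le_mul (hCv _) (hx.1 j) (norm_nonneg _) ((norm_nonneg _).trans (hCv (F x)))
      _ = _ := mul_one _
  calc ∫ x, χ x * v (F x) ∂νf ≤ ∫ x, ∑ j, χ x * (v (F x) * ‖sRow σ j x‖) ∂νf := by
        refine integral_mono_ae ?_ (integrable_finsetSum _ fun j _ => hIr j) ?_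
        · exact chi_int hD hνD hχ.continuous hχD hχ0 hχ1 hvF (B := Cv) (Eventually.of_forall fun x => hCv _)
        · filter_upwards [sRow_sum hV] with x hx
          simp only [← Finset.mul_sum]
          exact mul_le_mul_of_nonneg_left (le_mul_of_one_le_right (hv0 _) hx.2) (hχ0 x)
    _ = ∑ j, ∫ x, χ x * (v (F x) * ‖sRow σ j x‖) ∂νf := integral_finsetSum _ fun j _ => hIr j
    _ ≤ ∑ _j : Fin n, 4 * K * (∫ y, v y) := Finset.sum_le_sum fun j _ => hrow j
    _ = _ := by simp

end

lemma smooth_urysohn {n : ℕ} {C U : Set (En n)} (hC : IsCompact C) (hU : IsOpen U) (hCU : C ⊆ U) :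
    ∃ (L : Set (En n)) (v : En n → ℝ), IsCompact L ∧ L ⊆ U ∧ ContDiff ℝ (⊤ : ℕ∞) v ∧
      (∀ x ∉ L, v x = 0) ∧ (∀ x, 0 ≤ v x) ∧ (∀ x, v x ≤ 1) ∧ (∀ x ∈ C, v x = 1) := by
  obtain ⟨L, hL, h1, h2⟩ := exists_compact_between hC hU hCU
  obtain ⟨v, hv, hr, hs, h3⟩ := exists_contMDiff_support_eq_eq_one_iff (n := (⊤ : ℕ∞))
    (modelWithCornersSelf ℝ (En n)) isOpen_interior hC.isClosed h1
  refine ⟨L, v, hL, h2, hv.contDiff, fun x hx => ?_, fun x => (hr ⟨x, rfl⟩).1,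
    fun x => (hr ⟨x, rfl⟩).2, fun x hx => (h3 x).1 hx⟩
  by_contra h
  have : x ∈ Function.support v := h
  rw [hs] at this
  exact hx (interior_subset this)

lemma compact_bound {n : ℕ} {Ω₁ Ω₂ : Set (En n)} (hΩ₁ : IsOpen Ω₁) (hΩ₂ : IsOpen Ω₂)
    {f : En n → En n} {νf : Measure (En n)} (hBV : MemBVloc Ω₁ f νf) (hjump : NoJumpPart f νf)
    {K : ℝ} (hK : 0 ≤ K) (hper : PerHyp Ω₁ Ω₂ f K) {A : Set (En n)} (hA : A ⊆ Ω₂)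
    (hAm : MeasurableSet A) {C : Set (En n)} (hC : IsCompact C) (hCΩ : C ⊆ Ω₁) :
    νf (tildePreimage f A ∩ C) ≤ ENNReal.ofReal (n * (4 * K)) * volume A := by
  obtain ⟨hloc, hfin, σ, hV⟩ := hBV
  obtain ⟨K0, χ, hK0, hK0Ω, hχ, hχK, hχ0, hχ1, hχC⟩ := smooth_urysohn hC hΩ₁ hCΩ
  obtain ⟨δ, hδ, hδΩ⟩ := hK0.exists_cthickening_subset_open hΩ₁ hK0Ω
  set D := cthickening δ K0 with hDdef
  have hD : IsCompact D := hK0.cthickening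
  have hKD : ∀ x ∈ K0, ball x δ ⊆ D := fun x hx =>
    (ball_subset_closedBall).trans (closedBall_subset_cthickening hx δ)
  have hνD : νf D < ⊤ := hfin D hD hδΩ
  have hfD : Integrable (D.indicator f) := by
    rw [integrable_indicator_iff hD.measurableSet]
    exact hloc.integrableOn_compact_subset hδΩ hD
  have hf : AEMeasurable f (volume.restrict Ω₁) := hloc.aestronglyMeasurable.aemeasurable
  have hm : ∀ x ∈ K0, ∀ z, ApproxLimAt f x z →
      Tendsto (fun m => moll δ hδ m (D.indicator f) x) atTop (𝓝 z) := by
    intro x hx z hz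
    exact moll_tendsto hδ hfD (fun y hy => indicator_of_mem (hKD x hx hy) f) hz
  have hae : ∀ᵐ x ∂νf, ∃ z, ApproxLimAt f x z := hjump
  obtain ⟨F, hFm, hFt⟩ := measurable_limit_of_tendsto_metrizable_ae (μ := νf.restrict K0)
    (f := fun m x => moll δ hδ m (D.indicator f) x) (L := atTop)
    (fun m => (moll_contDiff hδ hfD.locallyIntegrable m).continuous.measurable.aemeasurable)
    (by
      rw [ae_restrict_iff' hK0.measurableSet]
      filter_upwards [hae] with x ⟨z, hz⟩ hx
      exact ⟨z, hm x hx z hz⟩)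
  rw [ae_restrict_iff' hK0.measurableSet] at hFt
  have hF : ∀ᵐ x ∂νf, x ∈ K0 → ApproxLimAt f x (F x) := by
    filter_upwards [hae, hFt] with x ⟨z, hz⟩ hx hxK
    rw [tendsto_nhds_unique (hx hxK) (hm x hxK z hz)]
    exact hz
  have hCK : C ⊆ K0 := by
    intro x hx
    by_contra h
    have := hχK x h
    rw [hχC x hx] at this
    exact one_ne_zero this
  have hfinC : νf C < ⊤ := hfin C hC hCΩ
  haveI : IsFiniteMeasure (νf.restrict C) := ⟨by simpa using hfinC⟩
  set ρ := (νf.restrict C).map F with hρ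
  haveI : IsFiniteMeasure ρ := by rw [hρ]; infer_instance
  -- test functions
  have hcomp : ∀ k : Set (En n), IsCompact k → k ⊆ A →
      ρ k ≤ ENNReal.ofReal (n * (4 * K)) * volume k := by
    intro k hk hkA
    rw [Set.measure_eq_iInf_isOpen k volume]
    have hne : ENNReal.ofReal (n * (4 * K)) ≠ ⊤ := ENNReal.ofReal_ne_top
    suffices h : ∀ U : Set (En n), k ⊆ U → IsOpen U → ρ k ≤ ENNReal.ofReal (n * (4 * K)) * volume U by
      obtain hz | hz := eq_or_ne (ENNReal.ofReal (n * (4 * K))) 0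
      · have := h univ (subset_univ _) isOpen_univ
        rw [hz, zero_mul] at this ⊢
        exact this
      rw [mul_comm, ← ENNReal.div_le_iff hz hne]
      refine le_iInf₂ fun U hU => le_iInf fun hUo => ?_
      rw [ENNReal.div_le_iff hz hne, mul_comm]
      exact h U hU hUo
    intro U hkU hU
    obtain ⟨L, v, hL, hLU, hv, hvL, hv0, hv1, hvk⟩ := smooth_urysohn hk (hU.inter hΩ₂)
      (subset_inter hkU (hkA.trans hA))
    have hsupp : tsupport v ⊆ L := by
      refine closure_minimal (fun x hx => ?_) hL.isClosed
      by_contra h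
      exact hx (hvL x h)
    have hvT : SmoothTest Ω₂ v := ⟨hv, HasCompactSupport.of_support_subset_isCompact hL
      ((subset_tsupport v).trans hsupp), hsupp.trans (hLU.trans inter_subset_right)⟩
    have hmain := osc_all hδ hΩ₁ hΩ₂ hf hK hper hV hK0.isClosed hKD hD hδΩ hνD hfD hFm hF
      hχ hχK hχ0 hχ1 hvT hv0
    have hK0D : K0 ⊆ D := self_subset_cthickening _
    have hintg : Integrable (fun x => χ x * v (F x)) νf :=
      chi_int hD hνD hχ.continuous (fun x hx => hχK x fun h => hx (hK0D h)) hχ0 hχ1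
        (hv.continuous.measurable.comp hFm) (B := 1)
        (Eventually.of_forall fun x => by
          rw [abs_of_nonneg (hv0 _)]; exact hv1 _)
    have h1 : ρ k ≤ ENNReal.ofReal (∫ x, χ x * v (F x) ∂νf) := by
      rw [ofReal_integral_eq_lintegral_ofReal hintg
        (Eventually.of_forall fun x => mul_nonneg (hχ0 _) (hv0 _)),
        hρ, Measure.map_apply hFm hk.measurableSet,
        Measure.restrict_apply (hFm hk.measurableSet)]
      rw [← lintegral_indicator_one ((hFm hk.measurableSet).inter hC.measurableSet)]
      refine lintegral_mono fun x => ?_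
      by_cases hx : x ∈ F ⁻¹' k ∩ C
      · rw [indicator_of_mem hx, hχC x hx.2, hvk _ hx.1]; simp
      · rw [indicator_of_notMem hx]; exact zero_le
    have h2 : ENNReal.ofReal (∫ y, v y) ≤ volume U := by
      rw [ofReal_integral_eq_lintegral_ofReal
        (hv.continuous.integrable_of_hasCompactSupport hvT.2.1) (Eventually.of_forall hv0),
        ← lintegral_indicator_one hU.measurableSet]
      refine lintegral_mono fun x => ?_
      by_cases hx : x ∈ U
      · rw [indicator_of_mem hx]; simpa using hv1 x
      · rw [indicator_of_notMem hx, hvL x fun h => hx (hLU h).1]; simp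
    calc ρ k ≤ ENNReal.ofReal (n * (4 * K) * ∫ y, v y) :=
          h1.trans (ENNReal.ofReal_le_ofReal (by linarith))
      _ = ENNReal.ofReal (n * (4 * K)) * ENNReal.ofReal (∫ y, v y) :=
          ENNReal.ofReal_mul (by positivity)
      _ ≤ _ := by gcongr
  have hρA : ρ A ≤ ENNReal.ofReal (n * (4 * K)) * volume A := by
    rw [hAm.measure_eq_iSup_isCompact_of_ne_top (measure_ne_top ρ A)]
    refine iSup₂_le fun k hk => iSup_le fun hkc => ?_
    exact (hcomp k hkc hk).trans (by gcongr)
  refine le_trans ?_ hρA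
  rw [hρ, Measure.map_apply hFm hAm, Measure.restrict_apply (hFm hAm)]
  refine measure_mono_ae ?_
  filter_upwards [hFt] with x hx
  rintro ⟨⟨z, hzA, hz⟩, hxC⟩
  refine ⟨?_, hxC⟩
  change F x ∈ A
  rw [tendsto_nhds_unique (hx (hCK hxC)) (hm x (hCK hxC) z hz)]
  exact hzA

lemma final_bound {n : ℕ} {Ω₁ Ω₂ : Set (En n)} (hΩ₁ : IsOpen Ω₁) (hΩ₂ : IsOpen Ω₂)
    {f : En n → En n} {νf : Measure (En n)} (hBV : MemBVloc Ω₁ f νf) (hjump : NoJumpPart f νf)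
    {K : ℝ} (hK : 0 ≤ K) (hper : PerHyp Ω₁ Ω₂ f K) {A : Set (En n)} (hA : A ⊆ Ω₂)
    (hAm : MeasurableSet A) :
    νf (tildePreimage f A) ≤ ENNReal.ofReal (16 * n * K) * volume A := by
  obtain ⟨G, hGc, hGs, hGU, hGm⟩ := hΩ₁.exists_iUnion_isClosed
  have hnull : νf Ω₁ᶜ = 0 := by
    obtain ⟨-, -, σ, hV⟩ := hBV
    exact hV.2.2.1
  have h1 : νf (tildePreimage f A) ≤
      νf (⋃ m : ℕ, tildePreimage f A ∩ (G m ∩ closedBall 0 m)) := by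
    refine measure_mono_ae ?_
    have : ∀ᵐ x ∂νf, x ∈ Ω₁ := hnull
    filter_upwards [this] with x hx hxA
    rw [← hGU, mem_iUnion] at hx
    obtain ⟨m, hm⟩ := hx
    obtain ⟨k, hk⟩ := exists_nat_ge ‖x‖
    refine mem_iUnion.2 ⟨max m k, hxA, hGm (le_max_left _ _) hm, ?_⟩
    rw [mem_closedBall_zero_iff]
    exact hk.trans (by exact_mod_cast le_max_right _ _)
  refine h1.trans ?_
  rw [Monotone.measure_iUnion]
  · refine iSup_le fun m => ?_
    refine (compact_bound hΩ₁ hΩ₂ hBV hjump hK hper hA hAm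
      ((isCompact_closedBall (0 : En n) m).inter_left (hGc m))
      (inter_subset_left.trans (hGs m))).trans ?_
    gcongr ENNReal.ofReal ?_ * _
    have : 0 ≤ (n : ℝ) * K := by positivity
    linarith
  · intro a b hab
    refine inter_subset_inter_right _ (inter_subset_inter (hGm hab) (closedBall_subset_closedBall ?_))
    exact_mod_cast hab

/-- **Corollary (Statement 16).** Let `f ∈ BV_loc(Ω₁, Ω₂)` have no jump part.  If for
every set `E ⊆ Ω₂` of finite perimeter in `Ω₂` the set `f⁻¹(E)` has finite perimeter in
`Ω₁` with `P(f⁻¹(E), Ω₁) ≤ K·P(E, Ω₂)`, then `|Df|(f̃⁻¹(A)) ≤ 16·n·K·Lⁿ(A)` for all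
Borel `A ⊆ Ω₂`. -/
theorem necessary_variation_bound_of_perimeter {n : ℕ}
    (Ω₁ Ω₂ : Set (En n)) (hΩ₁ : IsOpen Ω₁) (hΩ₂ : IsOpen Ω₂)
    (f : En n → En n) (hmaps : MapsTo f Ω₁ Ω₂)
    (νf : Measure (En n)) (hBV : MemBVloc Ω₁ f νf) (hjump : NoJumpPart f νf)
    (K : ℝ) (hK : 0 ≤ K)
    (hper : ∀ E : Set (En n), E ⊆ Ω₂ →
      ∀ νE : Measure (En n), MemBVs Ω₂ (E.indicator fun _ => (1 : ℝ)) νE →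
        ∃ νP : Measure (En n),
          MemBVs Ω₁ ((f ⁻¹' E ∩ Ω₁).indicator fun _ => (1 : ℝ)) νP ∧
          νP Ω₁ ≤ ENNReal.ofReal K * νE Ω₂) :
    ∀ A : Set (En n), A ⊆ Ω₂ → MeasurableSet A →
      νf (tildePreimage f A) ≤ ENNReal.ofReal (16 * n * K) * volume A := by
  intro A hA hAm
  exact final_bound hΩ₁ hΩ₂ hBV hjump hK hper hA hAm
end
end

section
/- There is a constant τ = τ(n) > 0 with the following property: for each atomless Borel probability measure μ on ℝⁿ there exist a point y ∈ ℝⁿ and a radius R > 0 such that μ(B(y, 2R)) ≥ τ and μ(ℝⁿ \ B(y, 3R)) ≥ τ. -/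
open MeasureTheory Metric Set Filter
open scoped ENNReal Topology NNReal

noncomputable section

theorem cover_ball_aux (n : ℕ) : ∃ t : Finset (En n), ∀ (z : En n) (R : ℝ), 0 < R →
    Metric.ball z (3 * R) ⊆ ⋃ y ∈ t, Metric.ball (z + R • y) R := by
  have hc : TotallyBounded (Metric.closedBall (0 : En n) 3) :=
    (isCompact_closedBall (0 : En n) 3).totallyBounded
  obtain ⟨t, htf, ht⟩ := Metric.totallyBounded_iff.1 hc 1 one_pos
  refine ⟨htf.toFinset, fun z R hR x hx => ?_⟩
  have h1 : R⁻¹ • (x - z) ∈ Metric.closedBall (0 : En n) 3 := by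
    rw [mem_closedBall_zero_iff, norm_smul, norm_inv, Real.norm_of_nonneg hR.le]
    rw [mem_ball_iff_norm] at hx
    rw [inv_mul_le_iff₀ hR]; linarith
  have h2 := ht h1
  simp only [mem_iUnion, exists_prop] at h2
  obtain ⟨y, hy, hxy⟩ := h2
  simp only [mem_iUnion, exists_prop, Set.Finite.mem_toFinset]
  refine ⟨y, hy, ?_⟩
  rw [mem_ball_iff_norm] at hxy ⊢
  have : x - (z + R • y) = R • (R⁻¹ • (x - z) - y) := by
    rw [smul_sub, smul_smul, mul_inv_cancel₀ hR.ne', one_smul]; abel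
  rw [this, norm_smul, Real.norm_of_nonneg hR.le]
  nlinarith

theorem good_ball_real (n : ℕ) : ∃ τ : ℝ, 0 < τ ∧
      ∀ μ : Measure (En n), IsProbabilityMeasure μ → (∀ x : En n, μ {x} = 0) →
        ∃ (y : En n) (R : ℝ), 0 < R ∧
          τ ≤ μ.real (Metric.ball y (2 * R)) ∧ τ ≤ μ.real (Metric.ball y (3 * R))ᶜ := by
  obtain ⟨t, ht⟩ := cover_ball_aux n
  obtain ⟨τ, hτ⟩ : ∃ τ : ℝ, τ = 1 / ((t.card : ℝ) + 2) := ⟨_, rfl⟩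
  have hτ0 : 0 < τ := by rw [hτ]; positivity
  have hτm : t.card * τ + 2 * τ = 1 := by rw [hτ]; field_simp
  have hτh : τ ≤ 1 / 2 := by
    have : 0 ≤ t.card * τ := by positivity
    linarith
  refine ⟨τ, hτ0, fun μ hμ hat => ?_⟩
  by_contra! H
  have key : ∀ (y : En n) (R : ℝ), 0 < R → τ ≤ μ.real (Metric.ball y (2 * R)) →
      1 - τ < μ.real (Metric.ball y (3 * R)) := by
    intro y R hR h
    have h1 := H y R hR h
    rw [probReal_compl_eq_one_sub measurableSet_ball] at h1
    linarith
  have step : ∀ (y : En n) (R : ℝ), ∃ y' : En n, 0 < R → 1 - τ < μ.real (Metric.ball y (3 * R)) →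
      1 - τ < μ.real (Metric.ball y' (3 * (R / 2))) := by
    intro y R
    by_contra! hno
    obtain ⟨hR, hP, -⟩ := hno y
    have hs : ∀ z ∈ t, μ.real (Metric.ball (y + R • z) R) ≤ τ := by
      intro z _
      by_contra! hz
      have h2 := key (y + R • z) (R / 2) (by positivity)
        (by rw [mul_div_cancel₀ R (two_ne_zero)]; exact hz.le)
      exact absurd h2 (not_lt.2 (hno _).2.2)
    have h3 : μ.real (Metric.ball y (3 * R)) ≤ t.card * τ := by
      calc μ.real (Metric.ball y (3 * R))
          ≤ μ.real (⋃ z ∈ t, Metric.ball (y + R • z) R) := measureReal_mono (ht y R hR) (measure_ne_top _ _)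
        _ ≤ ∑ z ∈ t, μ.real (Metric.ball (y + R • z) R) := measureReal_biUnion_finset_le _ _
        _ ≤ ∑ z ∈ t, τ := Finset.sum_le_sum hs
        _ = t.card * τ := by simp
    linarith
  choose f hf using step
  obtain ⟨R₀, hR₀, hstart⟩ : ∃ R : ℝ, 0 < R ∧ 1 - τ < μ.real (Metric.ball (0 : En n) (3 * R)) := by
    have hmono : Monotone (fun k : ℕ => Metric.ball (0 : En n) (k : ℝ)) :=
      fun a b hab => Metric.ball_subset_ball (by exact_mod_cast hab)
    have hl := tendsto_measure_iUnion_atTop (μ := μ) hmono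
    rw [Metric.iUnion_ball_nat, measure_univ] at hl
    have hl2 := (ENNReal.tendsto_toReal ENNReal.one_ne_top).comp hl
    have he := (hl2.eventually (lt_mem_nhds (show 1 - τ < (1 : ℝ≥0∞).toReal by simpa using hτ0))).and
      (eventually_gt_atTop 0)
    obtain ⟨k, hk, hk0⟩ := he.exists
    have hk0' : (0 : ℝ) < k := by exact_mod_cast hk0
    refine ⟨k / 3, by positivity, ?_⟩
    rw [mul_div_cancel₀ _ (three_ne_zero)]
    exact hk
  let s : ℕ → En n := fun k => Nat.rec (0 : En n) (fun k y => f y (R₀ / 2 ^ k)) k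
  have hs : ∀ k, 1 - τ < μ.real (Metric.ball (s k) (3 * (R₀ / 2 ^ k))) := by
    intro k
    induction k with
    | zero => simpa [s] using hstart
    | succ k ih =>
      have := hf (s k) (R₀ / 2 ^ k) (by positivity) ih
      rw [div_div, ← pow_succ] at this
      exact this
  have hd : ∀ k, dist (s k) (s (k + 1)) ≤ (12 * R₀) / 2 / 2 ^ k := by
    intro k
    have hne : (Metric.ball (s k) (3 * (R₀ / 2 ^ k)) ∩
        Metric.ball (s (k+1)) (3 * (R₀ / 2 ^ (k+1)))).Nonempty := by
      by_contra hdis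
      rw [Set.not_nonempty_iff_eq_empty, ← Set.disjoint_iff_inter_eq_empty] at hdis
      have h1 := measureReal_union (μ := μ) hdis measurableSet_ball
      have h2 : μ.real (Metric.ball (s k) (3 * (R₀ / 2 ^ k)) ∪
        Metric.ball (s (k+1)) (3 * (R₀ / 2 ^ (k+1)))) ≤ 1 := measureReal_le_one
      have := hs k
      have := hs (k+1)
      linarith
    obtain ⟨x, hx1, hx2⟩ := hne
    rw [Metric.mem_ball] at hx1 hx2
    have h3 := dist_triangle_left (s k) (s (k+1)) x
    have h4 : R₀ / 2 ^ (k+1) = R₀ / 2 ^ k / 2 := by rw [div_div, ← pow_succ]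
    have h5 : 12 * R₀ / 2 / 2 ^ k = 6 * (R₀ / 2 ^ k) := by ring
    have h6 : 0 < R₀ / 2 ^ k := by positivity
    rw [h4] at hx2
    linarith
  obtain ⟨a, ha⟩ := cauchySeq_tendsto_of_complete (cauchySeq_of_le_geometric_two hd)
  have hda := dist_le_of_le_geometric_two_of_tendsto hd ha
  obtain ⟨U, hU, hUo, hUm⟩ := Set.exists_isOpen_lt_of_lt (μ := μ) {a} (ENNReal.ofReal (1 / 2))
    (by rw [hat a]; simp)
  obtain ⟨ε, hε, hεU⟩ := Metric.isOpen_iff.1 hUo a (hU rfl)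
  obtain ⟨k, hk⟩ := exists_pow_lt_of_lt_one (show 0 < ε / (15 * R₀) by positivity)
    (show (1 / 2 : ℝ) < 1 by norm_num)
  have hk' : 15 * (R₀ / 2 ^ k) < ε := by
    rw [lt_div_iff₀ (by positivity)] at hk
    rw [one_div, inv_pow] at hk
    calc 15 * (R₀ / 2 ^ k) = (2 ^ k)⁻¹ * (15 * R₀) := by ring
      _ < ε := hk
  have hsub : Metric.ball (s k) (3 * (R₀ / 2 ^ k)) ⊆ U := by
    refine (Metric.ball_subset_ball' ?_).trans hεU
    have := hda k
    have h5 : 12 * R₀ / 2 ^ k = 12 * (R₀ / 2 ^ k) := by ring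
    linarith
  have h7 : μ.real U < 1 / 2 := by
    rw [measureReal_def]
    exact ENNReal.toReal_lt_of_lt_ofReal hUm
  have h8 := measureReal_mono (μ := μ) hsub
  have := hs k
  linarith

/-- **Lemma (Statement 17).** There is `τ = τ(n) > 0` such that every atomless Borel
probability measure `μ` on `ℝⁿ` admits a point `y` and a radius `R > 0` with
`μ(B(y, 2R)) ≥ τ` and `μ(ℝⁿ \ B(y, 3R)) ≥ τ`. -/
theorem exists_good_ball (n : ℕ) :
    ∃ τ : ℝ≥0∞, 0 < τ ∧
      ∀ μ : Measure (En n), IsProbabilityMeasure μ → (∀ x : En n, μ {x} = 0) →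
        ∃ (y : En n) (R : ℝ), 0 < R ∧
          τ ≤ μ (Metric.ball y (2 * R)) ∧ τ ≤ μ (Metric.ball y (3 * R))ᶜ := by
  obtain ⟨τ, hτ, h⟩ := good_ball_real n
  refine ⟨ENNReal.ofReal τ, ENNReal.ofReal_pos.2 hτ, fun μ hμ hat => ?_⟩
  obtain ⟨y, R, hR, h1, h2⟩ := h μ hμ hat
  exact ⟨y, R, hR, (ENNReal.ofReal_le_iff_le_toReal (measure_ne_top _ _)).2 h1,
    (ENNReal.ofReal_le_iff_le_toReal (measure_ne_top _ _)).2 h2⟩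
end
end
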